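/- arXiv:2312.06476 — 2 statements merged into one kernel-verified Lean document; each statement's English description precedes it below -/
import Mathlib

section
/- Let c be a 2-normalized symplectic capacity on subsets of ℂ². Then for all a, b > 0, c(P(a,b)) = 2·min(a,b). -/
/-!
The upper bound is an inclusion: `P(a, b) ⊆ E(a(1 + e), B)` for `B` large, and the second number
`N₂` of such an ellipsoid is `2a(1 + e)`; when `b < a` the two factors are exchanged first.

For the lower bound, by monotonicity and conformality, it suffices to embed `E(l, 2l)` into
`P(1, 1)` for every `l < 1`, because `N₂(l, 2l) = 2l`. The embedding is explicit.

* `strip_area`, `abs_stripY_lt`, `abs_stripU_le`, `strip_inj`: there is an injective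
  area-preserving map `z ↦ (U, Y)` from the plane to a strip, with `|Y| < 1/2` and `|U|` at most
  slightly more than `π|z|² / 2`. It is the composition of the cotangent lifts of `p ↦ f(p)` and
  of `t ↦ arctan t / π`, where `f` is a smooth approximation of `p|p| / 2`. For `f` exactly equal
  to `p|p| / 2` this would be symplectic polar coordinates on the two half planes `p > 0` and
  `p < 0`, glued along the slit `p = 0`.
* In strip coordinates `(U₀, Y₀, U₁, Y₁)` on both factors, the linear change
  `X = 1/2 + U₀ + U₁/2`, `Y = 1/2 - U₀ + U₁/2`, `α = Y₁ + Y₀/2`, `β = Y₁ - Y₀/2` is symplectic.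
  It carries the diamond `|U₀| + |U₁|/2 < 1/2`, which contains the image of `E(l, 2l)`, into the
  square `0 < X, Y < 1`.
* Reading `(X, α)`, `(Y, β)` as action-angle coordinates (`polarPt`) gives a point of `P(1, 1)`.
  Although the angles are only defined modulo one, injectivity persists, since `α - β = Y₀` and
  then `Y₁` are determined by their classes modulo one (`embMap_inj`).
-/

open Set MeasureTheory
open scoped Real ENNReal Pointwise

noncomputable section

/-- The standard symplectic form `ω = Σᵢ dxᵢ ∧ dyᵢ` on `ℂⁿ ≅ ℝ²ⁿ`. -/
def stdSymp (n : ℕ) (v w : Fin n → ℂ) : ℝ :=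
  ∑ i, ((starRingEnd ℂ) (v i) * w i).im

/-- `X` symplectically embeds into `X'` (both subsets of `ℂⁿ`): there is an injective map
`φ : X → ℂⁿ` with image in `X'`, smooth on the interior of `X`, whose derivative preserves
the standard symplectic form at every interior point. -/
def SympEmb (n : ℕ) (X X' : Set (Fin n → ℂ)) : Prop :=
  ∃ φ : (Fin n → ℂ) → (Fin n → ℂ),
    Set.InjOn φ X ∧ φ '' X ⊆ X' ∧ ContDiffOn ℝ (⊤ : ℕ∞) φ (interior X) ∧
    ∀ x ∈ interior X, ∀ v w : Fin n → ℂ,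
      stdSymp n (fderiv ℝ φ x v) (fderiv ℝ φ x w) = stdSymp n v w

/-- The ellipsoid `E(a₁,…,aₙ) ⊂ ℂⁿ`. -/
def ellipsoid {n : ℕ} (a : Fin n → ℝ) : Set (Fin n → ℂ) :=
  {z | ∑ i, Real.pi * ‖z i‖ ^ 2 / a i ≤ 1}

/-- The polydisk `P(a₁,…,aₙ) ⊂ ℂⁿ`. -/
def polydisk {n : ℕ} (a : Fin n → ℝ) : Set (Fin n → ℂ) :=
  {z | ∀ i, Real.pi * ‖z i‖ ^ 2 ≤ a i}

/-- `Nk k a` is the `k`-th smallest element (with multiplicity) of the multiset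
`{m · aᵢ : m ∈ ℤ_{>0}, 1 ≤ i ≤ n}`. -/
def Nk {n : ℕ} (k : ℕ) (a : Fin n → ℝ) : ℝ :=
  sInf {t : ℝ | k ≤ {p : Fin n × ℕ | ((p.2 : ℝ) + 1) * a p.1 ≤ t}.ncard}

/-- `c_k^max(X)`: the infimum of `N_k(a)` over ellipsoids `E(a)` into which `X`
symplectically embeds. -/
def ckmax (n k : ℕ) (X : Set (Fin n → ℂ)) : ℝ :=
  sInf {c : ℝ | ∃ a : Fin n → ℝ, (∀ i, 0 < a i) ∧ SympEmb n X (ellipsoid a) ∧ c = Nk k a}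

/-- `c_k^min(X)`: the supremum of `N_k(a)` over ellipsoids `E(a)` symplectically
embedding into `X`. -/
def ckmin (n k : ℕ) (X : Set (Fin n → ℂ)) : ℝ :=
  sSup {c : ℝ | ∃ a : Fin n → ℝ, (∀ i, 0 < a i) ∧ SympEmb n (ellipsoid a) X ∧ c = Nk k a}

/-- The moment map `μ(z₁,…,zₙ) = (π|z₁|²,…,π|zₙ|²)`. -/
def momentMap (n : ℕ) (z : Fin n → ℂ) : Fin n → ℝ := fun i => Real.pi * ‖z i‖ ^ 2

/-- The toric domain `X_Ω = μ⁻¹(Ω)`. -/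
def toricDomain {n : ℕ} (Ω : Set (Fin n → ℝ)) : Set (Fin n → ℂ) :=
  momentMap n ⁻¹' Ω

/-- `X_Ω` is a convex toric domain: `Ω ⊆ [0,∞)ⁿ`, the symmetrization
`Ω̂ = {x : (|x₁|,…,|xₙ|) ∈ Ω}` is compact and convex, and `Ω` is the closure of a
nonempty relatively open subset of `[0,∞)ⁿ`. -/
def IsConvexToricDomain {n : ℕ} (Ω : Set (Fin n → ℝ)) : Prop :=
  Ω ⊆ {x | ∀ i, 0 ≤ x i} ∧
  IsCompact {x : Fin n → ℝ | (fun i => |x i|) ∈ Ω} ∧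
  Convex ℝ {x : Fin n → ℝ | (fun i => |x i|) ∈ Ω} ∧
  ∃ V : Set (Fin n → ℝ), IsOpen V ∧ (V ∩ {x | ∀ i, 0 ≤ x i}).Nonempty ∧
    Ω = closure (V ∩ {x | ∀ i, 0 ≤ x i})

/-- The quadrilateral `Q_ε` with vertices `(0,0)`, `(1,0)`, `(ε,ε)`, `(0,1)`, i.e. the union
of the triangles `conv{(0,0),(1,0),(ε,ε)}` and `conv{(0,0),(ε,ε),(0,1)}`. -/
def Qeps (ε : ℝ) : Set (Fin 2 → ℝ) :=
  convexHull ℝ {![0, 0], ![1, 0], ![ε, ε]} ∪ convexHull ℝ {![0, 0], ![ε, ε], ![0, 1]}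


/-! ### Capacities of ellipsoids and elementary embeddings -/

lemma Nk_two {A B : ℝ} (hA : 0 < A) (hAB : 2 * A ≤ B) : Nk 2 ![A, B] = 2 * A := by
  apply IsLeast.csInf_eq
  constructor
  · have hfin : {p : Fin 2 × ℕ | ((p.2 : ℝ) + 1) * (![A, B] : Fin 2 → ℝ) p.1 ≤ 2 * A}.Finite := by
      apply Set.Finite.subset (Set.finite_univ.prod (Set.finite_Iic (2 : ℕ)))
      rintro ⟨i, m⟩ h
      simp only [Set.mem_ofPred_eq] at h
      refine ⟨Set.mem_univ _, ?_⟩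
      have hi : A ≤ (![A, B] : Fin 2 → ℝ) i := by
        fin_cases i
        · simp
        · simp; linarith
      have h1 : ((m : ℝ) + 1) * A ≤ 2 * A :=
        (mul_le_mul_of_nonneg_left hi (by positivity)).trans h
      have h2 : (m : ℝ) + 1 ≤ 2 := le_of_mul_le_mul_right h1 hA
      have h3 : m + 1 ≤ 2 := by exact_mod_cast h2
      simp only [Set.mem_Iic]; omega
    have hsub : ({((0 : Fin 2), (0 : ℕ)), ((0 : Fin 2), (1 : ℕ))} : Set (Fin 2 × ℕ)) ⊆
        {p : Fin 2 × ℕ | ((p.2 : ℝ) + 1) * (![A, B] : Fin 2 → ℝ) p.1 ≤ 2 * A} := by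
      rintro p (rfl | rfl)
      · simp; linarith
      · simp; linarith
    have := Set.ncard_le_ncard hsub hfin
    rw [Set.ncard_pair (by simp)] at this
    exact this
  · intro t ht
    by_contra! hlt
    have hsub : {p : Fin 2 × ℕ | ((p.2 : ℝ) + 1) * (![A, B] : Fin 2 → ℝ) p.1 ≤ t} ⊆
        {((0 : Fin 2), (0 : ℕ))} := by
      rintro ⟨i, m⟩ h
      simp only [Set.mem_ofPred_eq] at h
      have hm : (0 : ℝ) ≤ m := Nat.cast_nonneg m
      fin_cases i
      · simp only [Fin.zero_eta, Matrix.cons_val_zero] at h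
        have h1 : ((m : ℝ) + 1) * A < 2 * A := by linarith
        have h2 : (m : ℝ) + 1 < 2 := lt_of_mul_lt_mul_right h1 hA.le
        have h3 : m + 1 < 2 := by exact_mod_cast h2
        have : m = 0 := by omega
        simp [this]
      · simp at h
        nlinarith
    have := Set.ncard_le_ncard hsub (Set.finite_singleton _)
    rw [Set.ncard_singleton] at this
    exact absurd ((show 2 ≤ _ from ht).trans this) (by norm_num)

lemma SympEmb.of_subset {n : ℕ} {X X' : Set (Fin n → ℂ)} (h : X ⊆ X') : SympEmb n X X' :=
  ⟨id, Set.injOn_id _, by simpa using h, contDiff_id.contDiffOn, by simp⟩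

lemma sympEmb_polydisk_swap (a b : ℝ) : SympEmb 2 (polydisk ![a, b]) (polydisk ![b, a]) := by
  let s : (Fin 2 → ℂ) →L[ℝ] (Fin 2 → ℂ) :=
    ContinuousLinearMap.pi ![ContinuousLinearMap.proj 1, ContinuousLinearMap.proj 0]
  have hs : ∀ z, s z = ![z 1, z 0] := by
    intro z; ext i; fin_cases i <;> simp [s]
  refine ⟨s, ?_, ?_, s.contDiff.contDiffOn, ?_⟩
  · intro z _ w _ h
    rw [hs, hs] at h
    have h0 := congrFun h 0
    have h1 := congrFun h 1
    simp at h0 h1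
    ext i; fin_cases i <;> simp [h0, h1]
  · rintro _ ⟨z, hz, rfl⟩
    rw [hs]
    intro i
    have h0 := hz 0
    have h1 := hz 1
    fin_cases i <;> simpa using by assumption
  · intro x _ v w
    rw [s.fderiv, hs, hs]
    simp [stdSymp, Fin.sum_univ_two]
    ring

lemma smul_polydisk {r : ℝ} (hr : 0 < r) :
    r • polydisk ![1, 1] = polydisk ![r ^ 2, r ^ 2] := by
  ext z
  rw [Set.mem_smul_set_iff_inv_smul_mem₀ hr.ne']
  have h : ∀ x : ℂ, π * ‖r⁻¹ • x‖ ^ 2 ≤ 1 ↔ π * ‖x‖ ^ 2 ≤ r ^ 2 := by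
    intro x
    rw [norm_smul, Real.norm_eq_abs, abs_of_pos (inv_pos.2 hr),
      show π * (r⁻¹ * ‖x‖) ^ 2 = π * ‖x‖ ^ 2 / r ^ 2 by field_simp, div_le_one (by positivity)]
  simp [polydisk, Fin.forall_fin_two, ← h]

/-! ### Area-preserving map from the plane to a strip of width one -/

/-- A smooth odd increasing approximation of `p ↦ p |p| / 2`. The two correction terms are
matched so that `2 |f| ≤ f' ^ 2` holds everywhere. -/
def foldFun (δ p : ℝ) : ℝ := p * √(p ^ 2 + 2 * δ ^ 2) / 2 + δ * p

/-- The derivative of `foldFun`. -/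
def foldDer (δ p : ℝ) : ℝ :=
  (p ^ 2 + (p ^ 2 + 2 * δ ^ 2)) / (2 * √(p ^ 2 + 2 * δ ^ 2)) + δ

/-- The slope `t = q / f'(p)`, the momentum conjugate to `f(p)`. -/
def stripSlope (δ : ℝ) (z : ℂ) : ℝ := z.im / foldDer δ z.re

/-- The unbounded coordinate of the strip map. -/
def stripU (δ : ℝ) (z : ℂ) : ℝ := π * (foldFun δ z.re * (1 + stripSlope δ z ^ 2))

/-- The coordinate of the strip map taking values in `(-1/2, 1/2)`. -/
def stripY (δ : ℝ) (z : ℂ) : ℝ := Real.arctan (stripSlope δ z) / π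

section strip

variable {δ : ℝ}

lemma foldRad_pos (hδ : 0 < δ) (p : ℝ) : 0 < p ^ 2 + 2 * δ ^ 2 := by positivity

lemma foldDer_pos (hδ : 0 < δ) (p : ℝ) : 0 < foldDer δ p := by
  unfold foldDer; positivity

lemma contDiff_foldFun (hδ : 0 < δ) : ContDiff ℝ (⊤ : ℕ∞) (foldFun δ) := by
  have h : ContDiff ℝ (⊤ : ℕ∞) fun p : ℝ => √(p ^ 2 + 2 * δ ^ 2) :=
    ContDiff.sqrt (by fun_prop) fun p => (foldRad_pos hδ p).ne'
  unfold foldFun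
  fun_prop

lemma contDiff_foldDer (hδ : 0 < δ) : ContDiff ℝ (⊤ : ℕ∞) (foldDer δ) := by
  have h : ContDiff ℝ (⊤ : ℕ∞) fun p : ℝ => √(p ^ 2 + 2 * δ ^ 2) :=
    ContDiff.sqrt (by fun_prop) fun p => (foldRad_pos hδ p).ne'
  unfold foldDer
  refine ContDiff.add (ContDiff.div (by fun_prop) (by fun_prop) fun p => ?_) contDiff_const
  have := Real.sqrt_pos.2 (foldRad_pos hδ p)
  positivity

lemma hasDerivAt_foldFun (hδ : 0 < δ) (p : ℝ) : HasDerivAt (foldFun δ) (foldDer δ p) p := by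
  have h0 := foldRad_pos hδ p
  have h1 : HasDerivAt (fun p : ℝ => p ^ 2 + 2 * δ ^ 2) (2 * p) p := by
    simpa using (hasDerivAt_pow 2 p).add_const (2 * δ ^ 2)
  have h2 := (((hasDerivAt_id p).mul (h1.sqrt h0.ne')).div_const 2).add
    ((hasDerivAt_id p).const_mul δ)
  refine h2.congr_deriv ?_
  have hs := Real.sqrt_pos.2 h0
  have hsq := Real.sq_sqrt h0.le
  unfold foldDer
  simp only [id]
  field_simp
  rw [hsq]; ring

lemma strictMono_foldFun (hδ : 0 < δ) : StrictMono (foldFun δ) :=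
  strictMono_of_hasDerivAt_pos (hasDerivAt_foldFun hδ) (foldDer_pos hδ)

lemma contDiff_stripSlope (hδ : 0 < δ) : ContDiff ℝ (⊤ : ℕ∞) (stripSlope δ) :=
  ContDiff.div Complex.imCLM.contDiff ((contDiff_foldDer hδ).comp Complex.reCLM.contDiff)
    fun z => (foldDer_pos hδ z.re).ne'

lemma contDiff_stripU (hδ : 0 < δ) : ContDiff ℝ (⊤ : ℕ∞) (stripU δ) := by
  have h1 := contDiff_stripSlope hδ
  have h2 : ContDiff ℝ (⊤ : ℕ∞) fun z : ℂ => foldFun δ z.re :=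
    (contDiff_foldFun hδ).comp Complex.reCLM.contDiff
  unfold stripU
  fun_prop

lemma contDiff_stripY (hδ : 0 < δ) : ContDiff ℝ (⊤ : ℕ∞) (stripY δ) :=
  (Real.contDiff_arctan.comp (contDiff_stripSlope hδ)).div_const π

/-- `(stripU, stripY)` is area preserving: `dU ∧ dY = dx ∧ dy`. -/
lemma strip_area (hδ : 0 < δ) (z v w : ℂ) :
    fderiv ℝ (stripU δ) z v * fderiv ℝ (stripY δ) z w
      - fderiv ℝ (stripU δ) z w * fderiv ℝ (stripY δ) z v = ((starRingEnd ℂ) v * w).im := by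
  have hg := foldDer_pos hδ z.re
  have hre : HasFDerivAt (fun z : ℂ => z.re) Complex.reCLM z := Complex.reCLM.hasFDerivAt
  have him : HasFDerivAt (fun z : ℂ => z.im) Complex.imCLM z := Complex.imCLM.hasFDerivAt
  have hf := (hasDerivAt_foldFun hδ z.re).comp_hasFDerivAt z hre
  have hgd : HasDerivAt (foldDer δ) (deriv (foldDer δ) z.re) z.re :=
    ((contDiff_foldDer hδ).differentiable (by simp) z.re).hasDerivAt
  have hT : HasFDerivAt (stripSlope δ) (fderiv ℝ (stripSlope δ) z) z :=
    ((contDiff_stripSlope hδ).differentiable (by simp) z).hasFDerivAt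
  -- differentiate the identity `t * f'(p) = q`
  have hTv : ∀ v : ℂ, fderiv ℝ (stripSlope δ) z v * foldDer δ z.re
      + stripSlope δ z * (deriv (foldDer δ) z.re * v.re) = v.im := by
    intro v
    have h1 := hT.mul (hgd.comp_hasFDerivAt z hre)
    have h2 : (stripSlope δ * (foldDer δ ∘ fun z : ℂ => z.re)) = fun z : ℂ => z.im := by
      ext x
      simp [stripSlope, div_mul_cancel₀ _ (foldDer_pos hδ x.re).ne']
    rw [h2] at h1
    have h3 := congrArg (fun L : ℂ →L[ℝ] ℝ => L v) (h1.unique him)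
    simp at h3
    linarith
  have hU : HasFDerivAt (stripU δ) _ z :=
    ((hf.mul ((hT.pow 2).const_add 1)).const_mul π)
  have hY : HasFDerivAt (stripY δ) _ z := (hT.arctan.mul_const π⁻¹)
  rw [hU.fderiv, hY.fderiv]
  have hv := hTv v
  have hw := hTv w
  have hpi := Real.pi_pos
  have ht : 0 < 1 + stripSlope δ z ^ 2 := by positivity
  generalize fderiv ℝ (stripSlope δ) z = T at *
  simp
  rw [← hv, ← hw]
  field_simp
  ring

lemma abs_stripY_lt (δ : ℝ) (z : ℂ) : |stripY δ z| < 1 / 2 := by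
  have hpi := Real.pi_pos
  have h1 := Real.arctan_lt_pi_div_two (stripSlope δ z)
  have h2 := Real.neg_pi_div_two_lt_arctan (stripSlope δ z)
  unfold stripY
  rw [abs_lt, lt_div_iff₀ hpi, div_lt_iff₀ hpi]
  constructor <;> linarith

lemma abs_foldFun_le (hδ : 0 < δ) (p : ℝ) :
    |foldFun δ p| ≤ p ^ 2 / 2 + δ ^ 2 / 2 + δ * |p| := by
  have h0 := foldRad_pos hδ p
  have hs := Real.sqrt_pos.2 h0
  have hsq := Real.sq_sqrt h0.le
  have : |foldFun δ p| = |p| * √(p ^ 2 + 2 * δ ^ 2) / 2 + δ * |p| := by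
    rw [show foldFun δ p = p * (√(p ^ 2 + 2 * δ ^ 2) / 2 + δ) by unfold foldFun; ring,
      abs_mul, abs_of_pos (show 0 < √(p ^ 2 + 2 * δ ^ 2) / 2 + δ by positivity)]
    ring
  rw [this]
  nlinarith [sq_nonneg (|p| - √(p ^ 2 + 2 * δ ^ 2)), sq_abs p]

lemma two_abs_foldFun_le (hδ : 0 < δ) (p : ℝ) : 2 * |foldFun δ p| ≤ foldDer δ p ^ 2 := by
  have h0 := foldRad_pos hδ p
  have hs := Real.sqrt_pos.2 h0
  have hsq := Real.sq_sqrt h0.le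
  set s := √(p ^ 2 + 2 * δ ^ 2) with hsdef
  -- `f' - δ ≥ |p|` by the inequality of arithmetic and geometric means
  have h1 : |p| + δ ≤ foldDer δ p := by
    unfold foldDer
    rw [← hsdef, ← hsq, add_le_add_iff_right, le_div_iff₀ (by positivity)]
    nlinarith [sq_nonneg (|p| - s), sq_abs p]
  have h2 := abs_foldFun_le hδ p
  nlinarith [abs_nonneg p, sq_abs p]

/-- The disc of area `s` lands in the centred rectangle of area slightly above `s`. -/
lemma abs_stripU_le (hδ : 0 < δ) (z : ℂ) :
    |stripU δ z| ≤ π * (‖z‖ ^ 2 / 2 + δ * ‖z‖ + δ ^ 2 / 2) := by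
  have hg := foldDer_pos hδ z.re
  have h1 := abs_foldFun_le hδ z.re
  have h2 := two_abs_foldFun_le hδ z.re
  have h3 : |foldFun δ z.re| * stripSlope δ z ^ 2 ≤ z.im ^ 2 / 2 := by
    unfold stripSlope
    rw [div_pow, ← mul_div_assoc, div_le_iff₀ (by positivity)]
    nlinarith [sq_nonneg z.im]
  have h4 : ‖z‖ ^ 2 = z.re ^ 2 + z.im ^ 2 := by
    rw [Complex.sq_norm, Complex.normSq_apply]; ring
  have h5 := mul_le_mul_of_nonneg_left (Complex.abs_re_le_norm z) hδ.le
  unfold stripU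
  rw [abs_mul, abs_of_pos Real.pi_pos, abs_mul,
    abs_of_pos (show 0 < 1 + stripSlope δ z ^ 2 by positivity)]
  apply mul_le_mul_of_nonneg_left _ Real.pi_pos.le
  nlinarith

lemma strip_inj (hδ : 0 < δ) {z w : ℂ} (hU : stripU δ z = stripU δ w)
    (hY : stripY δ z = stripY δ w) : z = w := by
  have hpi := Real.pi_pos
  have ht : stripSlope δ z = stripSlope δ w :=
    Real.arctan_injective ((div_left_inj' hpi.ne').1 hY)
  have hf : foldFun δ z.re = foldFun δ w.re := by
    unfold stripU at hU
    rw [ht] at hU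
    have : (1 + stripSlope δ w ^ 2) ≠ 0 := by positivity
    exact mul_right_cancel₀ this (mul_left_cancel₀ hpi.ne' hU)
  have hre : z.re = w.re := (strictMono_foldFun hδ).injective hf
  have him : z.im = w.im := by
    unfold stripSlope at ht
    rw [hre] at ht
    exact (div_left_inj' (foldDer_pos hδ w.re).ne').1 ht
  exact Complex.ext hre him

end strip

/-! ### Polar coordinates -/

/-- The point of `ℂ` with action `π|z|² = X` (for `X ≥ 0`) and angle `α`, measured in turns. -/
def polarPt (X α : ℝ) : ℂ := (√(X / π) : ℝ) * Complex.exp ((2 * π * α : ℝ) * Complex.I)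

lemma norm_polarPt {X : ℝ} (hX : 0 ≤ X) (α : ℝ) : π * ‖polarPt X α‖ ^ 2 = X := by
  have hpi := Real.pi_pos
  rw [polarPt, norm_mul, Complex.norm_exp_ofReal_mul_I, mul_one, Complex.norm_real,
    Real.norm_eq_abs, sq_abs, Real.sq_sqrt (by positivity)]
  field_simp

lemma polarPt_inj {X X' α α' : ℝ} (hX : 0 < X) (hX' : 0 < X')
    (h : polarPt X α = polarPt X' α') : X = X' ∧ ∃ k : ℤ, α = α' + k := by
  have hpi := Real.pi_pos
  have hXX : X = X' := by rw [← norm_polarPt hX.le α, h, norm_polarPt hX'.le]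
  subst hXX
  refine ⟨rfl, ?_⟩
  have hs : ((√(X / π) : ℝ) : ℂ) ≠ 0 := by
    exact_mod_cast (Real.sqrt_pos.2 (by positivity)).ne'
  obtain ⟨k, hk⟩ := Complex.exp_eq_exp_iff_exists_int.1 (mul_left_cancel₀ hs h)
  refine ⟨k, ?_⟩
  have h1 := congrArg Complex.im hk
  simp at h1
  have h2 : 2 * π * (α - (α' + k)) = 0 := by linarith
  have := (mul_eq_zero.1 h2).resolve_left (by positivity)
  linarith

section polar

variable {E : Type*} [NormedAddCommGroup E] [NormedSpace ℝ E] {X α : E → ℝ} {e : E}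

lemma ContDiffAt.polarPt (hX : ContDiffAt ℝ (⊤ : ℕ∞) X e) (hα : ContDiffAt ℝ (⊤ : ℕ∞) α e)
    (h0 : 0 < X e) : ContDiffAt ℝ (⊤ : ℕ∞) (fun x => polarPt (X x) (α x)) e := by
  have hpi := Real.pi_pos
  have h1 : ContDiffAt ℝ (⊤ : ℕ∞) (fun x => √(X x / π)) e :=
    (hX.div_const π).sqrt (by positivity)
  have h2 : ContDiffAt ℝ (⊤ : ℕ∞) (fun x => ((√(X x / π) : ℝ) : ℂ)) e :=
    Complex.ofRealCLM.contDiff.contDiffAt.comp e h1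
  have h3 : ContDiffAt ℝ (⊤ : ℕ∞) (fun x => ((2 * π * α x : ℝ) : ℂ)) e :=
    Complex.ofRealCLM.contDiff.contDiffAt.comp e (contDiffAt_const.mul hα)
  exact h2.mul (h3.mul contDiffAt_const).cexp

/-- Polar coordinates are symplectic: the area form pulls back to `dX ∧ dα`. -/
lemma polarPt_area {DX Dα : E →L[ℝ] ℝ} (hX : HasFDerivAt X DX e) (hα : HasFDerivAt α Dα e)
    (h0 : 0 < X e) (v w : E) :
    ((starRingEnd ℂ) (fderiv ℝ (fun x => polarPt (X x) (α x)) e v)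
      * fderiv ℝ (fun x => polarPt (X x) (α x)) e w).im = DX v * Dα w - DX w * Dα v := by
  have hpi := Real.pi_pos
  have hXp : 0 < X e / π := by positivity
  have h1 : HasFDerivAt (fun x => √(X x / π)) _ e :=
    (show HasFDerivAt (fun x => X x / π) (π⁻¹ • DX) e by
      simpa only [div_eq_mul_inv] using hX.mul_const π⁻¹).sqrt hXp.ne'
  have h2 : HasFDerivAt (fun x => ((√(X x / π) : ℝ) : ℂ)) _ e :=
    Complex.ofRealCLM.hasFDerivAt.comp e h1
  have h3 : HasFDerivAt (fun x => ((2 * π * α x : ℝ) : ℂ)) _ e :=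
    Complex.ofRealCLM.hasFDerivAt.comp e (hα.const_mul (2 * π))
  have h4 : HasFDerivAt (fun x => polarPt (X x) (α x)) _ e :=
    h2.mul (h3.mul_const Complex.I).cexp
  have hs := Real.sqrt_pos.2 hXp
  have hD : ∀ v, fderiv ℝ (fun x => polarPt (X x) (α x)) e v =
      ((DX v / (2 * π * √(X e / π)) : ℝ) + (√(X e / π) * (2 * π * Dα v) : ℝ) * Complex.I)
        * Complex.exp ((2 * π * α e : ℝ) * Complex.I) := by
    intro v
    have hs' : ((√(X e / π) : ℝ) : ℂ) ≠ 0 := by exact_mod_cast hs.ne'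
    have hpi' : (π : ℂ) ≠ 0 := by exact_mod_cast hpi.ne'
    rw [h4.fderiv]
    simp
    field_simp
    ring
  rw [hD, hD, map_mul, mul_mul_mul_comm, ← Complex.normSq_eq_conj_mul_self,
    Complex.normSq_eq_norm_sq, Complex.norm_exp_ofReal_mul_I]
  have him : ∀ a b a' b' : ℝ, ((starRingEnd ℂ) ((a : ℂ) + (b : ℂ) * Complex.I)
      * ((a' : ℂ) + (b' : ℂ) * Complex.I) * (((1 : ℝ) ^ 2 : ℝ) : ℂ)).im = a * b' - b * a' := by
    intro a b a' b'
    simp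
    ring
  rw [him]
  field_simp

end polar

/-! ### Embedding an ellipsoid into the polydisk -/

/-- The first action coordinate of the embedding. -/
def embX (δ : ℝ) (z : Fin 2 → ℂ) : ℝ := 1 / 2 + stripU δ (z 0) + stripU δ (z 1) / 2

/-- The second action coordinate of the embedding. -/
def embY (δ : ℝ) (z : Fin 2 → ℂ) : ℝ := 1 / 2 - stripU δ (z 0) + stripU δ (z 1) / 2

/-- The angle conjugate to `embX`. -/
def embA (δ : ℝ) (z : Fin 2 → ℂ) : ℝ := stripY δ (z 1) + stripY δ (z 0) / 2

/-- The angle conjugate to `embY`. -/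
def embB (δ : ℝ) (z : Fin 2 → ℂ) : ℝ := stripY δ (z 1) - stripY δ (z 0) / 2

/-- The embedding: strip coordinates on both factors, then a linear symplectic change of
coordinates, then inverse action-angle coordinates. -/
def embMap (δ : ℝ) (z : Fin 2 → ℂ) : Fin 2 → ℂ :=
  ![polarPt (embX δ z) (embA δ z), polarPt (embY δ z) (embB δ z)]

lemma exists_delta {l : ℝ} (hl : l < 1) :
    ∃ δ : ℝ, 0 < δ ∧ π * (3 / 2 * δ + 3 / 4 * δ ^ 2) < (1 - l) / 2 := by
  have hc : Filter.Tendsto (fun δ : ℝ => π * (3 / 2 * δ + 3 / 4 * δ ^ 2))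
      (nhdsWithin 0 (Set.Ioi 0)) (nhds 0) := by
    have : Continuous fun δ : ℝ => π * (3 / 2 * δ + 3 / 4 * δ ^ 2) := by fun_prop
    simpa using (this.tendsto 0).mono_left nhdsWithin_le_nhds
  have h := (hc.eventually (gt_mem_nhds (show 0 < (1 - l) / 2 by linarith))).and
    self_mem_nhdsWithin
  obtain ⟨δ, h1, h2⟩ := h.exists
  exact ⟨δ, h2, h1⟩

/-- On the ellipsoid both actions stay inside `(0, 1)`. -/
lemma emb_bounds {l δ : ℝ} (hl0 : 0 < l) (hl : l < 1) (hδ : 0 < δ)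
    (hsmall : π * (3 / 2 * δ + 3 / 4 * δ ^ 2) < (1 - l) / 2) {z : Fin 2 → ℂ}
    (hz : z ∈ ellipsoid ![l, 2 * l]) :
    (0 < embX δ z ∧ embX δ z < 1) ∧ (0 < embY δ z ∧ embY δ z < 1) := by
  have hpi := Real.pi_gt_three
  have hE : π * ‖z 0‖ ^ 2 + π * ‖z 1‖ ^ 2 / 2 ≤ l := by
    have h : ∑ i, π * ‖z i‖ ^ 2 / (![l, 2 * l] : Fin 2 → ℝ) i ≤ 1 := hz
    simp only [Fin.sum_univ_two, Matrix.cons_val_zero, Matrix.cons_val_one] at h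
    have h2 : π * ‖z 0‖ ^ 2 / l + π * ‖z 1‖ ^ 2 / (2 * l)
        = (π * ‖z 0‖ ^ 2 + π * ‖z 1‖ ^ 2 / 2) / l := by field_simp
    rw [h2, div_le_one hl0] at h
    exact h
  have n0 : ‖z 0‖ ≤ 1 := by
    by_contra! h
    nlinarith [sq_nonneg ‖z 1‖]
  have n1 : ‖z 1‖ ≤ 1 := by
    by_contra! h
    nlinarith [sq_nonneg ‖z 0‖]
  have u0 := abs_stripU_le hδ (z 0)
  have u1 := abs_stripU_le hδ (z 1)
  have m0 := mul_le_mul_of_nonneg_left n0 (mul_nonneg Real.pi_pos.le hδ.le)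
  have m1 := mul_le_mul_of_nonneg_left n1 (mul_nonneg Real.pi_pos.le hδ.le)
  have hsum : |stripU δ (z 0)| + |stripU δ (z 1)| / 2 < 1 / 2 := by
    nlinarith
  have a0 := abs_le.1 (le_refl |stripU δ (z 0)|)
  have a1 := abs_le.1 (le_refl |stripU δ (z 1)|)
  unfold embX embY
  refine ⟨⟨?_, ?_⟩, ?_, ?_⟩ <;> linarith [a0.1, a0.2, a1.1, a1.2]

lemma int_eq_zero_of_abs_lt {k : ℤ} {x : ℝ} (h : x = k) (hx : |x| < 1) : k = 0 := by
  rw [h] at hx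
  exact Int.abs_lt_one_iff.1 (by exact_mod_cast hx)

/-- The angles are only known modulo `1`, but their difference and half sum are the strip
coordinates, which live in an interval of length one. -/
lemma embMap_inj {δ : ℝ} (hδ : 0 < δ) {z w : Fin 2 → ℂ} (hzX : 0 < embX δ z)
    (hzY : 0 < embY δ z) (hwX : 0 < embX δ w) (hwY : 0 < embY δ w)
    (h : embMap δ z = embMap δ w) : z = w := by
  obtain ⟨hX, k, hk⟩ := polarPt_inj hzX hwX (by simpa [embMap] using congrFun h 0)
  obtain ⟨hY, m, hm⟩ := polarPt_inj hzY hwY (by simpa [embMap] using congrFun h 1)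
  unfold embX at hX
  unfold embY at hY
  unfold embA at hk
  unfold embB at hm
  have hz0 := abs_lt.1 (abs_stripY_lt δ (z 0))
  have hz1 := abs_lt.1 (abs_stripY_lt δ (z 1))
  have hw0 := abs_lt.1 (abs_stripY_lt δ (w 0))
  have hw1 := abs_lt.1 (abs_stripY_lt δ (w 1))
  have e1 : k - m = 0 := by
    apply int_eq_zero_of_abs_lt (x := stripY δ (z 0) - stripY δ (w 0))
    · push_cast; linarith
    · rw [abs_lt]; constructor <;> linarith [hz0.1, hz0.2, hw0.1, hw0.2]
  have e1' : (k : ℝ) = m := by exact_mod_cast sub_eq_zero.1 e1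
  have e2 : k = 0 := by
    apply int_eq_zero_of_abs_lt (x := stripY δ (z 1) - stripY δ (w 1))
    · linarith
    · rw [abs_lt]; constructor <;> linarith [hz1.1, hz1.2, hw1.1, hw1.2]
  have e2' : (k : ℝ) = 0 := by exact_mod_cast e2
  have z0 : z 0 = w 0 := strip_inj hδ (by linarith) (by linarith)
  have z1 : z 1 = w 1 := strip_inj hδ (by linarith) (by linarith)
  funext i
  fin_cases i
  · exact z0
  · exact z1

section

variable {δ : ℝ}

lemma contDiff_emb (hδ : 0 < δ) :
    (ContDiff ℝ (⊤ : ℕ∞) (embX δ) ∧ ContDiff ℝ (⊤ : ℕ∞) (embY δ)) ∧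
      ContDiff ℝ (⊤ : ℕ∞) (embA δ) ∧ ContDiff ℝ (⊤ : ℕ∞) (embB δ) := by
  have hU : ∀ i, ContDiff ℝ (⊤ : ℕ∞) fun z : Fin 2 → ℂ => stripU δ (z i) := fun i =>
    (contDiff_stripU hδ).comp (contDiff_apply ℝ ℂ i)
  have hY : ∀ i, ContDiff ℝ (⊤ : ℕ∞) fun z : Fin 2 → ℂ => stripY δ (z i) := fun i =>
    (contDiff_stripY hδ).comp (contDiff_apply ℝ ℂ i)
  exact ⟨⟨(contDiff_const.add (hU 0)).add ((hU 1).div_const 2),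
    (contDiff_const.sub (hU 0)).add ((hU 1).div_const 2)⟩,
    (hY 1).add ((hY 0).div_const 2), (hY 1).sub ((hY 0).div_const 2)⟩

lemma contDiffAt_embMap (hδ : 0 < δ) {z : Fin 2 → ℂ} (hX : 0 < embX δ z)
    (hY : 0 < embY δ z) : ContDiffAt ℝ (⊤ : ℕ∞) (embMap δ) z := by
  obtain ⟨⟨cX, cY⟩, cA, cB⟩ := contDiff_emb hδ
  rw [contDiffAt_pi]
  intro i
  fin_cases i
  · exact cX.contDiffAt.polarPt cA.contDiffAt hX
  · exact cY.contDiffAt.polarPt cB.contDiffAt hY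

lemma embMap_symp (hδ : 0 < δ) {z : Fin 2 → ℂ} (hX : 0 < embX δ z)
    (hY : 0 < embY δ z) (v w : Fin 2 → ℂ) :
    stdSymp 2 (fderiv ℝ (embMap δ) z v) (fderiv ℝ (embMap δ) z w) = stdSymp 2 v w := by
  have hd : DifferentiableAt ℝ (embMap δ) z :=
    (contDiffAt_embMap hδ hX hY).differentiableAt (by simp)
  have hcomp : ∀ i v, fderiv ℝ (embMap δ) z v i = fderiv ℝ (fun x => embMap δ x i) z v := by
    intro i v
    rw [fderiv_apply hd i]
    rfl
  have dU : ∀ i : Fin 2, HasFDerivAt (fun z : Fin 2 → ℂ => stripU δ (z i))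
      ((fderiv ℝ (stripU δ) (z i)).comp (ContinuousLinearMap.proj i)) z := fun i =>
    HasFDerivAt.comp (g := stripU δ) z
      ((contDiff_stripU hδ).differentiable (by simp) (z i)).hasFDerivAt
      (hasFDerivAt_apply (F' := fun _ => ℂ) i z)
  have dY : ∀ i : Fin 2, HasFDerivAt (fun z : Fin 2 → ℂ => stripY δ (z i))
      ((fderiv ℝ (stripY δ) (z i)).comp (ContinuousLinearMap.proj i)) z := fun i =>
    HasFDerivAt.comp (g := stripY δ) z
      ((contDiff_stripY hδ).differentiable (by simp) (z i)).hasFDerivAt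
      (hasFDerivAt_apply (F' := fun _ => ℂ) i z)
  have hXd : HasFDerivAt (embX δ) _ z := ((dU 0).const_add (1 / 2)).add ((dU 1).mul_const 2⁻¹)
  have hYd : HasFDerivAt (embY δ) _ z := ((dU 0).const_sub (1 / 2)).add ((dU 1).mul_const 2⁻¹)
  have hAd : HasFDerivAt (embA δ) _ z := (dY 1).add ((dY 0).mul_const 2⁻¹)
  have hBd : HasFDerivAt (embB δ) _ z := (dY 1).sub ((dY 0).mul_const 2⁻¹)
  have p0 := polarPt_area hXd hAd hX v w
  have p1 := polarPt_area hYd hBd hY v w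
  have s0 := strip_area hδ (z 0) (v 0) (w 0)
  have s1 := strip_area hδ (z 1) (v 1) (w 1)
  unfold stdSymp
  rw [Fin.sum_univ_two, Fin.sum_univ_two, ← s0, ← s1, hcomp, hcomp, hcomp, hcomp]
  refine (congrArg₂ (· + ·) p0 p1).trans ?_
  simp
  ring

end

/-- Volume filling: `E(l, 2l)` embeds into the unit polydisk for every `l < 1`. -/
lemma sympEmb_ellipsoid_polydisk {l : ℝ} (hl0 : 0 < l) (hl : l < 1) :
    SympEmb 2 (ellipsoid ![l, 2 * l]) (polydisk ![1, 1]) := by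
  obtain ⟨δ, hδ, hsmall⟩ := exists_delta hl
  have hb := fun z hz => emb_bounds (z := z) hl0 hl hδ hsmall hz
  refine ⟨embMap δ, ?_, ?_, ?_, ?_⟩
  · intro z hz w hw h
    exact embMap_inj hδ (hb z hz).1.1 (hb z hz).2.1 (hb w hw).1.1 (hb w hw).2.1 h
  · rintro _ ⟨z, hz, rfl⟩ i
    obtain ⟨⟨x0, x1⟩, y0, y1⟩ := hb z hz
    fin_cases i
    · exact (norm_polarPt x0.le _).trans_le x1.le
    · exact (norm_polarPt y0.le _).trans_le y1.le
  · intro z hz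
    have hz' := hb z (interior_subset hz)
    exact (contDiffAt_embMap hδ hz'.1.1 hz'.2.1).contDiffWithinAt
  · intro z hz v w
    have hz' := hb z (interior_subset hz)
    exact embMap_symp hδ hz'.1.1 hz'.2.1 v w

lemma polydisk_subset_ellipsoid {a b e : ℝ} (ha : 0 < a) (hb : 0 < b) (he : 0 < e) :
    polydisk ![a, b] ⊆
      ellipsoid ![a * (1 + e), max (2 * (a * (1 + e))) (b * (1 + e) / e)] := by
  intro z hz
  have h0 : π * ‖z 0‖ ^ 2 ≤ a := hz 0
  have h1 : π * ‖z 1‖ ^ 2 ≤ b := hz 1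
  have hB : 0 < b * (1 + e) / e := by positivity
  have i0 : π * ‖z 0‖ ^ 2 / (a * (1 + e)) ≤ 1 / (1 + e) := by
    calc _ ≤ a / (a * (1 + e)) := by gcongr
      _ = _ := by field_simp
  have i1 : π * ‖z 1‖ ^ 2 / max (2 * (a * (1 + e))) (b * (1 + e) / e) ≤ e / (1 + e) := by
    calc _ ≤ b / (b * (1 + e) / e) := by
          gcongr
          exact le_max_right _ _
      _ = _ := by field_simp
  have i2 : 1 / (1 + e) + e / (1 + e) = 1 := by field_simp
  change ∑ i, π * ‖z i‖ ^ 2 / (![a * (1 + e), max (2 * (a * (1 + e))) (b * (1 + e) / e)] :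
    Fin 2 → ℝ) i ≤ 1
  simp only [Fin.sum_univ_two, Matrix.cons_val_zero, Matrix.cons_val_one]
  linarith

/-- Any 2-normalized symplectic capacity `c` on subsets of `ℂ²` satisfies
`c(P(a,b)) = 2·min(a,b)` for all `a, b > 0`. -/
theorem stmt2 (c : Set (Fin 2 → ℂ) → ℝ≥0∞)
    (hmono : ∀ X X' : Set (Fin 2 → ℂ), SympEmb 2 X X' → c X ≤ c X')
    (hconf : ∀ r : ℝ, 0 < r → ∀ X : Set (Fin 2 → ℂ),
      c (r • X) = ENNReal.ofReal (r ^ 2) * c X)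
    (hnorm : ∀ a : Fin 2 → ℝ, (∀ i, 0 < a i) → c (ellipsoid a) = ENNReal.ofReal (Nk 2 a)) :
    ∀ a b : ℝ, 0 < a → 0 < b → c (polydisk ![a, b]) = ENNReal.ofReal (2 * min a b) := by
  have hupper : ∀ a b : ℝ, 0 < a → 0 < b → c (polydisk ![a, b]) ≤ ENNReal.ofReal (2 * a) := by
    intro a b ha hb
    have hlim : Filter.Tendsto (fun e : ℝ => ENNReal.ofReal (2 * (a * (1 + e))))
        (nhdsWithin 0 (Set.Ioi 0)) (nhds (ENNReal.ofReal (2 * a))) := by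
      have : Continuous fun e : ℝ => ENNReal.ofReal (2 * (a * (1 + e))) :=
        ENNReal.continuous_ofReal.comp (by fun_prop)
      simpa using (this.tendsto 0).mono_left nhdsWithin_le_nhds
    refine ge_of_tendsto hlim ?_
    filter_upwards [self_mem_nhdsWithin] with e he
    have he' : 0 < e := he
    have hA : 0 < a * (1 + e) := by positivity
    have h := hmono _ _ (SympEmb.of_subset (polydisk_subset_ellipsoid ha hb he'))
    rwa [hnorm _ (by
      intro i
      fin_cases i
      · exact hA
      · exact lt_max_of_lt_left (by positivity)), Nk_two hA (le_max_left _ _)] at h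
  have hunit : ENNReal.ofReal 2 ≤ c (polydisk ![1, 1]) := by
    have hlim : Filter.Tendsto (fun l : ℝ => ENNReal.ofReal (2 * l))
        (nhdsWithin 1 (Set.Iio 1)) (nhds (ENNReal.ofReal 2)) := by
      have : Continuous fun l : ℝ => ENNReal.ofReal (2 * l) :=
        ENNReal.continuous_ofReal.comp (by fun_prop)
      simpa using (this.tendsto 1).mono_left nhdsWithin_le_nhds
    refine le_of_tendsto hlim ?_
    filter_upwards [Ioo_mem_nhdsLT (show (0 : ℝ) < 1 by norm_num)] with l hl
    have h := hmono _ _ (sympEmb_ellipsoid_polydisk hl.1 hl.2)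
    rwa [hnorm _ (by
      intro i
      have := hl.1
      fin_cases i <;> simpa), Nk_two hl.1 le_rfl] at h
  -- `P(m, m)` with `m = min a b` is a rescaled unit polydisk inside `P(a, b)`
  have hlower : ∀ a b m : ℝ, 0 < m → m ≤ a → m ≤ b →
      ENNReal.ofReal (2 * m) ≤ c (polydisk ![a, b]) := by
    intro a b m hm hma hmb
    have hsub : polydisk ![m, m] ⊆ polydisk ![a, b] := by
      intro z hz i
      have h0 := hz 0
      have h1 := hz 1
      fin_cases i
      · exact h0.trans hma
      · exact h1.trans hmb
    refine le_trans ?_ (hmono _ _ (SympEmb.of_subset hsub))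
    have h := hconf √m (Real.sqrt_pos.2 hm) (polydisk ![1, 1])
    rw [smul_polydisk (Real.sqrt_pos.2 hm), Real.sq_sqrt hm.le] at h
    rw [h, mul_comm 2 m, ENNReal.ofReal_mul hm.le]
    gcongr
  intro a b ha hb
  refine le_antisymm ?_ (hlower a b _ (lt_min ha hb) (min_le_left _ _) (min_le_right _ _))
  rcases le_total a b with h | h
  · rw [min_eq_left h]
    exact hupper a b ha hb
  · rw [min_eq_right h]
    exact (hmono _ _ (sympEmb_polydisk_swap a b)).trans (hupper b a hb ha)

end
end

section
/- For every n ≥ 2, the interior of the ellipsoid E(1,2,…,2) ⊂ ℂⁿ (with a₁ = 1 and a₂ = … = aₙ = 2) symplectically embeds into the unit polydisk P(1,…,1) ⊂ ℂⁿ. -/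
/-!
Write `h(z) = ∑ π|zᵢ|²/aᵢ` with `a = (1, 2, …, 2)`. The embedding of `{h < 1}` is built in three
symplectic steps.

*Unfolding the discs.* With `zᵢ = Xᵢ + √-1 Yᵢ`, the idealized coordinates
`xᵢ = (π/2) sign(Xᵢ)|zᵢ|²`, `yᵢ = arctan(Yᵢ/|Xᵢ|)/π ∈ (-1/2, 1/2)` are symplectic and satisfy
`∑ 2|xᵢ|/aᵢ = h < 1`, but are not smooth along `Xᵢ = 0`. They are smoothed by replacing `X|X|/2`
with `M(X, δ) = X√(X² + δ²)/2 + δX` and `|X|` with `m = ∂M/∂X`: put `Tᵢ = Yᵢ/m(Xᵢ, δ)`,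
`xᵢ = π M(Xᵢ, δ)(1 + Tᵢ²)` and `yᵢ = arctan(Tᵢ)/π`. For constant `δ > 0` this is symplectic; since
no constant `δ` leaves the image inside `∑ 2|xᵢ|/aᵢ < 1`, the parameter is taken to be
`δ = κ(1 - h)`, which shrinks near the boundary (`sum_abs_xx_lt`).

*Correcting the form.* A variable `δ` adds the error `dδ ∧ ∑ Pᵢ` with `Pᵢ = B dYᵢ + Yᵢ B_X dXᵢ`,
`B = (∂M/∂δ)/m` (`pair_wedge`); modulo `dδ`, `Pᵢ` is `d(Yᵢ B(Xᵢ, δ))`. Hence the error is of the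
form `-dh ∧ du` with `u = κ ∑ Yᵢ B(Xᵢ, δ)`, and it is cancelled by first moving each point along the
Hamiltonian flow `Φ` of `h`, a product of rotations, for the time `t` with `t = u(Φ_t z)`, because
`z ↦ Φ_{t(z)} z` changes the form by `dh ∧ dt` (`xx_yy_symp`). The time `t` exists, is unique and is
smooth since `u` varies along the flow with derivative less than one (`deriv_uu_lt`,
`contDiffAt_tt`). Injectivity (`eq_of_xx_yy_eq`) comes down to recovering `h` from `(x, y)`, which
follows from comparing the profiles for two values of `δ` (`compare`).

*Fitting into the cube.* The affine symplectic map `(xl, yl)` sends `2|x₀| + ∑_{i ≥ 1} |xᵢ| < 1`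
into `0 < x'ⱼ < 1` (`xl_mem`) and is injective modulo integers in `y'` on the cube
`|yᵢ| < 1/2` (`yl_injective`). Polar coordinates `π|φⱼ|² = x'ⱼ`, `arg φⱼ = 2π y'ⱼ` then land in the
polydisk.
-/

open Set MeasureTheory
open scoped Real ENNReal Pointwise

noncomputable section

namespace Fold

/-! ### The profile functions -/

/-- The smoothed absolute value `√(X² + d²)`. -/
def sS (X d : ℝ) : ℝ := √(X ^ 2 + d ^ 2)

/-- A smooth odd replacement of `X|X|/2`, with smoothing parameter `d`. -/
def sM (X d : ℝ) : ℝ := X * sS X d / 2 + d * X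

/-- `∂M/∂X`, a smooth even replacement of `|X|`. -/
def sm (X d : ℝ) : ℝ := (X ^ 2 + d ^ 2 / 2) / sS X d + d

/-- `∂M/∂d`. -/
def sMd (X d : ℝ) : ℝ := X * d / (2 * sS X d) + X

/-- `∂m/∂X`. -/
def smX (X d : ℝ) : ℝ := X * (X ^ 2 + 3 * d ^ 2 / 2) / sS X d ^ 3

/-- `∂m/∂d = ∂²M/∂X∂d`. -/
def smd (X d : ℝ) : ℝ := d ^ 3 / (2 * sS X d ^ 3) + 1

/-- `∂²M/∂d²`. -/
def sMdd (X d : ℝ) : ℝ := X ^ 3 / (2 * sS X d ^ 3)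

/-- The quotient `B = (∂M/∂d) / (∂M/∂X)`. -/
def sB (X d : ℝ) : ℝ := sMd X d / sm X d

/-- `∂B/∂X`. -/
def sBX (X d : ℝ) : ℝ := (smd X d * sm X d - sMd X d * smX X d) / sm X d ^ 2

/-- `∂B/∂d`. -/
def sBd (X d : ℝ) : ℝ := (sMdd X d * sm X d - sMd X d * smd X d) / sm X d ^ 2

section profile

variable {X d : ℝ}

lemma sS_pos (hd : 0 < d) : 0 < sS X d := Real.sqrt_pos.2 (by positivity)

lemma sS_sq (X d : ℝ) : sS X d ^ 2 = X ^ 2 + d ^ 2 := Real.sq_sqrt (by positivity)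

lemma abs_le_sS (X d : ℝ) : |X| ≤ sS X d :=
  Real.abs_le_sqrt (by nlinarith [sq_nonneg d])

lemma sS_neg (X d : ℝ) : sS (-X) d = sS X d := by simp [sS]

lemma sM_neg (X d : ℝ) : sM (-X) d = -sM X d := by simp [sM, sS_neg]; ring

lemma sm_neg (X d : ℝ) : sm (-X) d = sm X d := by simp [sm, sS_neg]

lemma abs_add_le_sm (hd : 0 < d) : |X| + d ≤ sm X d := by
  have h := sS_pos (X := X) hd
  have h2 := sS_sq X d
  unfold sm
  gcongr
  rw [le_div_iff₀ h]
  nlinarith [sq_nonneg (|X| - sS X d), sq_abs X]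

lemma sm_pos (hd : 0 < d) : 0 < sm X d :=
  lt_of_lt_of_le (by positivity) (abs_add_le_sm hd)

lemma abs_sB_le (hd : 0 < d) : |sB X d| ≤ 3 / 2 := by
  have h := sS_pos (X := X) hd
  have hm := sm_pos (X := X) hd
  have hds : d ≤ sS X d := by
    have := abs_le_sS d X
    rw [abs_of_pos hd] at this
    simpa [sS, add_comm] using this
  rw [sB, abs_div, abs_of_pos hm, div_le_iff₀ hm]
  have e : sMd X d = X * (d / (2 * sS X d) + 1) := by unfold sMd; ring
  have h1 : d / (2 * sS X d) + 1 ≤ 3 / 2 := by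
    have : d / (2 * sS X d) ≤ 1 / 2 := by
      rw [div_le_iff₀ (by positivity)]; linarith
    linarith
  rw [e, abs_mul, abs_of_pos (a := d / (2 * sS X d) + 1) (by positivity)]
  have := abs_add_le_sm (X := X) hd
  nlinarith [abs_nonneg X]

lemma sBX_nonneg (hd : 0 < d) : 0 ≤ sBX X d := by
  have h := sS_pos (X := X) hd
  have h2 := sS_sq X d
  have hm := sm_pos (X := X) hd
  apply div_nonneg _ (by positivity)
  -- normalise `X = p S`, `d = q S` with `p² + q² = 1`
  set s := sS X d with hs
  obtain ⟨p, hp⟩ : ∃ p, X = p * s := ⟨X / s, by field_simp⟩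
  obtain ⟨q, hq⟩ : ∃ q, d = q * s := ⟨d / s, by field_simp⟩
  have hq0 : 0 < q := by
    by_contra hh
    nlinarith
  have hpq : p ^ 2 + q ^ 2 = 1 := by
    have : (p ^ 2 + q ^ 2) * s ^ 2 = 1 * s ^ 2 := by
      rw [one_mul]; nth_rw 2 [h2]; rw [hp, hq]; ring
    exact mul_right_cancel₀ (by positivity) this
  have e : smd X d * sm X d - sMd X d * smX X d
      = s * ((1 + q ^ 3 / 2) * (p ^ 2 + q ^ 2 / 2 + q)
        - p ^ 2 * (1 + q / 2) * (p ^ 2 + 3 * q ^ 2 / 2)) := by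
    unfold smd sm sMd smX
    rw [← hs]
    rw [hp, hq]
    field_simp
    ring
  rw [e]
  apply mul_nonneg h.le
  have hp2 : p ^ 2 = 1 - q ^ 2 := by linarith
  have hq1 : q ≤ 1 := by nlinarith [sq_nonneg p]
  rw [hp2]
  nlinarith [pow_pos hq0 2, pow_pos hq0 3, pow_pos hq0 4, pow_pos hq0 5,
    mul_nonneg (pow_pos hq0 3).le (sub_nonneg.2 hq1)]

lemma two_abs_sM_le_sq (hd : 0 < d) : 2 * |sM X d| ≤ sm X d ^ 2 := by
  have h := sS_pos (X := X) hd
  have h2 := sS_sq X d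
  have e : |sM X d| = |X| * (sS X d / 2 + d) := by
    rw [← abs_of_pos (a := sS X d / 2 + d) (by positivity), ← abs_mul]
    unfold sM; congr 1; ring
  have := abs_add_le_sm (X := X) hd
  have h3 : (|X| + d) ^ 2 ≤ sm X d ^ 2 := by gcongr
  rw [e]
  nlinarith [sq_nonneg (|X| - sS X d), sq_abs X]

lemma two_abs_sM_le (hd : 0 < d) : 2 * |sM X d| ≤ X ^ 2 + d ^ 2 / 2 + 2 * d * |X| := by
  have h := sS_pos (X := X) hd
  have h2 := sS_sq X d
  have e : |sM X d| = |X| * (sS X d / 2 + d) := by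
    rw [← abs_of_pos (a := sS X d / 2 + d) (by positivity), ← abs_mul]
    unfold sM; congr 1; ring
  rw [e]
  nlinarith [sq_nonneg (|X| - sS X d), sq_abs X]

end profile

section deriv

variable {E : Type*} [NormedAddCommGroup E] [NormedSpace ℝ E] {f d : E → ℝ} {f' d' : E →L[ℝ] ℝ}
  {x : E}

lemma hasFDerivAt_div (hf : HasFDerivAt f f' x) (hd : HasFDerivAt d d' x) (h0 : d x ≠ 0) :
    HasFDerivAt (fun z => f z / d z) ((1 / d x) • f' - (f x / d x ^ 2) • d') x := by
  have := hf.mul ((hasDerivAt_inv h0).comp_hasFDerivAt x hd)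
  refine (this.congr_fderiv ?_).congr_of_eventuallyEq (.of_forall fun z => ?_)
  · ext v
    simp
    field_simp
    ring
  · simp [div_eq_mul_inv]

lemma hasFDerivAt_sS (hf : HasFDerivAt f f' x) (hd : HasFDerivAt d d' x) (h0 : 0 < d x) :
    HasFDerivAt (fun z => sS (f z) (d z))
      ((f x / sS (f x) (d x)) • f' + (d x / sS (f x) (d x)) • d') x := by
  have h := sS_pos (X := f x) h0
  have := ((hf.pow 2).add (hd.pow 2)).sqrt
    (by simp only [Pi.add_apply]; positivity)
  refine this.congr_fderiv ?_
  ext v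
  simp only [Pi.add_apply, smul_apply, add_apply, smul_eq_mul]
  change 1 / (2 * sS (f x) (d x)) * _ = _
  field_simp
  simp
  ring

lemma hasFDerivAt_sM (hf : HasFDerivAt f f' x) (hd : HasFDerivAt d d' x) (h0 : 0 < d x) :
    HasFDerivAt (fun z => sM (f z) (d z))
      (sm (f x) (d x) • f' + sMd (f x) (d x) • d') x := by
  have h := sS_pos (X := f x) h0
  have h2 := sS_sq (f x) (d x)
  have := ((hf.mul (hasFDerivAt_sS hf hd h0)).mul_const (1 / 2)).add (hd.mul hf)
  refine (this.congr_fderiv ?_).congr_of_eventuallyEq (.of_forall fun z => ?_)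
  · ext v
    simp only [smul_apply, add_apply, smul_eq_mul, sm, sMd]
    field_simp
    rw [h2]
    ring
  · simp [sM]; ring

lemma hasFDerivAt_sm (hf : HasFDerivAt f f' x) (hd : HasFDerivAt d d' x) (h0 : 0 < d x) :
    HasFDerivAt (fun z => sm (f z) (d z))
      (smX (f x) (d x) • f' + smd (f x) (d x) • d') x := by
  have h := sS_pos (X := f x) h0
  have h2 := sS_sq (f x) (d x)
  have := (hasFDerivAt_div ((hf.pow 2).add ((hd.pow 2).mul_const (1 / 2)))
    (hasFDerivAt_sS hf hd h0) h.ne').add hd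
  refine (this.congr_fderiv ?_).congr_of_eventuallyEq (.of_forall fun z => ?_)
  · ext v
    simp only [smul_apply, Pi.add_apply, sub_apply, add_apply, smul_eq_mul, smX, smd]
    generalize sS (f x) (d x) = s at *
    simp
    field_simp
    rw [h2]
    ring
  · simp [sm, div_eq_mul_inv]

lemma hasFDerivAt_sMd (hf : HasFDerivAt f f' x) (hd : HasFDerivAt d d' x) (h0 : 0 < d x) :
    HasFDerivAt (fun z => sMd (f z) (d z))
      (smd (f x) (d x) • f' + sMdd (f x) (d x) • d') x := by
  have h := sS_pos (X := f x) h0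
  have h2 := sS_sq (f x) (d x)
  have := (hasFDerivAt_div ((hf.mul hd).mul_const (1 / 2))
    (hasFDerivAt_sS hf hd h0) h.ne').add hf
  refine (this.congr_fderiv ?_).congr_of_eventuallyEq (.of_forall fun z => ?_)
  · ext v
    simp only [smul_apply, sub_apply, add_apply, smul_eq_mul, smd, sMdd, Pi.mul_apply]
    generalize sS (f x) (d x) = s at *
    field_simp
    rw [h2]
    ring
  · simp [sMd]; ring

lemma hasFDerivAt_sB (hf : HasFDerivAt f f' x) (hd : HasFDerivAt d d' x) (h0 : 0 < d x) :
    HasFDerivAt (fun z => sB (f z) (d z))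
      (sBX (f x) (d x) • f' + sBd (f x) (d x) • d') x := by
  have h := sm_pos (X := f x) h0
  refine (hasFDerivAt_div (hasFDerivAt_sMd hf hd h0)
    (hasFDerivAt_sm hf hd h0) h.ne').congr_fderiv ?_
  ext v
  simp only [smul_apply, sub_apply, add_apply, smul_eq_mul, sBX, sBd]
  field_simp
  ring

end deriv


/-! ### Comparing two smoothing parameters -/

lemma sS_scale {d : ℝ} (hd : 0 < d) (U : ℝ) : sS (d * U) d = d * sS U 1 := by
  unfold sS
  rw [show (d * U) ^ 2 + d ^ 2 = d ^ 2 * (U ^ 2 + 1 ^ 2) by ring,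
    Real.sqrt_mul (by positivity), Real.sqrt_sq hd.le]

lemma sM_scale {d : ℝ} (hd : 0 < d) (U : ℝ) : sM (d * U) d = d ^ 2 * sM U 1 := by
  unfold sM; rw [sS_scale hd]; ring

lemma sm_scale {d : ℝ} (hd : 0 < d) (U : ℝ) : sm (d * U) d = d * sm U 1 := by
  have := sS_pos (X := U) one_pos
  unfold sm; rw [sS_scale hd]; field_simp

lemma sS_mono {U V d e : ℝ} (hU : 0 ≤ U) (hUV : U ≤ V) (hd : 0 ≤ d) (hde : d ≤ e) :
    sS U d ≤ sS V e := by
  unfold sS; gcongr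

/-- The defect `m² - 2M` at `d = 1` decreases on `[0, ∞)`. -/
lemma defect_anti {U V : ℝ} (hU : 0 ≤ U) (hUV : U ≤ V) :
    sm V 1 ^ 2 - 2 * sM V 1 ≤ sm U 1 ^ 2 - 2 * sM U 1 := by
  have key : ∀ W : ℝ, 0 ≤ W → sm W 1 ^ 2 - 2 * sM W 1
      = sS W 1 / (sS W 1 + W) + 1 / (4 * sS W 1 ^ 2) + 1 / (sS W 1 * (sS W 1 + W) ^ 2) := by
    intro W hW
    have h := sS_pos (X := W) one_pos
    have h2 := sS_sq W 1
    unfold sm sM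
    generalize sS W 1 = s at *
    have hs : 0 < s + W := by positivity
    have e1 : s / (s + W) = s * (s - W) := by
      rw [div_eq_iff hs.ne']; nlinarith
    have e2 : 1 / (s * (s + W) ^ 2) = (s - W) ^ 2 / s := by
      rw [div_eq_div_iff (by positivity) h.ne']
      have : (s - W) * (s + W) = 1 := by nlinarith
      calc 1 * s = s * ((s - W) * (s + W)) ^ 2 := by rw [this]; ring
        _ = _ := by ring
    rw [e1, e2]
    have hW2 : W ^ 2 = s ^ 2 - 1 := by linarith
    have : (W ^ 2 + 1 ^ 2 / 2) / s = s - 1 / (2 * s) := by rw [hW2]; field_simp; ring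
    rw [this]
    have e3 : (s - W) ^ 2 / s = 2 * s - 1 / s - 2 * W := by
      rw [sub_sq, hW2]; field_simp; ring
    rw [e3]
    field_simp
    ring
  have hV := hU.trans hUV
  rw [key U hU, key V hV]
  have hu := sS_pos (X := U) one_pos
  have hv := sS_pos (X := V) one_pos
  have hs : sS U 1 ≤ sS V 1 := sS_mono hU hUV zero_le_one le_rfl
  have h1 : sS V 1 / (sS V 1 + V) ≤ sS U 1 / (sS U 1 + U) := by
    rw [div_le_div_iff₀ (by positivity) (by positivity)]
    have : sS V 1 * U ≤ sS U 1 * V := by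
      apply abs_le_of_sq_le_sq' _ (by positivity) |>.2
      rw [mul_pow, mul_pow, sS_sq, sS_sq]
      nlinarith
    nlinarith
  gcongr

/-- If two smoothing parameters `e ≤ d` give the same value of `M` (at `X` and `Y`), then for
the larger parameter `d` the slope `m` is at least as large, and `X` is at most `3(d - e)` smaller
than `Y`. After rescaling to `d = 1`, the first claim is the monotonicity of `m² - 2M`. -/
lemma compare_nonneg {X Y d e : ℝ} (hX : 0 ≤ X) (hY : 0 ≤ Y) (he : 0 < e) (hde : e ≤ d)
    (hM : sM X d = sM Y e) : sm Y e ≤ sm X d ∧ Y ≤ X + 3 * (d - e) := by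
  have hd : 0 < d := he.trans_le hde
  constructor
  · obtain ⟨U, rfl⟩ : ∃ U, X = d * U := ⟨X / d, by field_simp⟩
    obtain ⟨V, rfl⟩ : ∃ V, Y = e * V := ⟨Y / e, by field_simp⟩
    have hU : 0 ≤ U := nonneg_of_mul_nonneg_right hX hd
    have hV : 0 ≤ V := nonneg_of_mul_nonneg_right hY he
    rw [sM_scale hd, sM_scale he] at hM
    rw [sm_scale hd, sm_scale he]
    have hUV : U ≤ V := by
      by_contra! hlt
      have hs := sS_mono hV hlt.le zero_le_one le_rfl
      have hpos := sS_pos (X := V) one_pos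
      have h1 : sM V 1 < sM U 1 := by
        unfold sM; nlinarith
      have h0 : 0 ≤ sM V 1 := by unfold sM; positivity
      have : e ^ 2 ≤ d ^ 2 := by gcongr
      nlinarith [pow_pos he 2]
    have h := defect_anti hU hUV
    have h0 : 0 ≤ sm V 1 ^ 2 - 2 * sM V 1 := by
      have := two_abs_sM_le_sq (X := V) one_pos
      linarith [le_abs_self (sM V 1)]
    have h2 : e ^ 2 ≤ d ^ 2 := by gcongr
    have hmu := sm_pos (X := U) one_pos
    refine (abs_le_of_sq_le_sq' ?_ (by positivity)).2
    rw [mul_pow, mul_pow]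
    nlinarith [pow_pos hd 2]
  · by_contra! hlt
    have hs : sS X d ≤ sS X e + (d - e) := by
      have := sS_pos (X := X) he
      have hee : e ≤ sS X e := by
        rw [sS]; apply Real.le_sqrt_of_sq_le; nlinarith
      rw [sS, Real.sqrt_le_left (by linarith)]
      nlinarith [sS_sq X e]
    have h2 : sS X e ≤ sS Y e := sS_mono hX (by linarith) he.le le_rfl
    have h3 := abs_le_sS X e
    rw [abs_of_nonneg hX] at h3
    have hpos := sS_pos (X := X) he
    have : sM X d < sM Y e := by
      unfold sM
      have a1 : X * sS X d ≤ X * (sS X e + (d - e)) := by gcongr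
      have a2 : (X + 3 * (d - e)) * sS X e ≤ Y * sS Y e := by gcongr
      have a3 : (d - e) * X ≤ (d - e) * sS X e := by
        apply mul_le_mul_of_nonneg_left h3; linarith
      nlinarith
    linarith

lemma sM_abs (X : ℝ) {d : ℝ} (hd : 0 < d) : sM |X| d = |sM X d| := by
  have h := sS_pos (X := X) hd
  rcases le_total 0 X with h0 | h0
  · have : 0 ≤ sM X d := by unfold sM; positivity
    rw [abs_of_nonneg h0, abs_of_nonneg this]
  · have : 0 ≤ sM (-X) d := by
      unfold sM; rw [sS_neg]
      have : 0 ≤ -X := by linarith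
      positivity
    rw [abs_of_nonpos h0, ← abs_of_nonneg this, sM_neg, abs_neg]

lemma sm_abs (X d : ℝ) : sm |X| d = sm X d := by
  rcases abs_choice X with h | h <;> rw [h]
  rw [sm_neg]

lemma compare {X Y d e : ℝ} (he : 0 < e) (hde : e ≤ d)
    (hM : sM X d = sM Y e) : sm Y e ≤ sm X d ∧ |Y| ≤ |X| + 3 * (d - e) := by
  have := compare_nonneg (abs_nonneg X) (abs_nonneg Y) he hde
    (by rw [sM_abs _ he, sM_abs _ (he.trans_le hde), hM])
  rwa [sm_abs, sm_abs] at this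

/-- For a fixed smoothing parameter `M` is injective in `X`. -/
lemma sM_injective {X Y d : ℝ} (hd : 0 < d) (hM : sM X d = sM Y d) : X = Y := by
  have h1 := (compare hd le_rfl hM).2
  have h2 := (compare hd le_rfl hM.symm).2
  have habs : |X| = |Y| := by linarith
  rcases abs_eq_abs.1 habs with h | h
  · exact h
  · rw [h, sM_neg] at hM
    have h0 : sM Y d = 0 := by linarith
    have hp := sS_pos (X := Y) hd
    have : Y * (sS Y d / 2 + d) = 0 := by rw [← h0]; unfold sM; ring
    rcases mul_eq_zero.1 this with h' | h'
    · rw [h, h']; simp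
    · have : 0 < sS Y d / 2 + d := by positivity
      linarith

/-! ### The circle action and the time function -/

section ContDiff

variable {E : Type*} [NormedAddCommGroup E] [NormedSpace ℝ E] {f d : E → ℝ} {x : E}
  {k : WithTop ℕ∞}

lemma contDiffAt_sS (hf : ContDiffAt ℝ k f x) (hd : ContDiffAt ℝ k d x) (h0 : 0 < d x) :
    ContDiffAt ℝ k (fun z => sS (f z) (d z)) x :=
  ((hf.pow 2).add (hd.pow 2)).sqrt (by positivity)

lemma contDiffAt_sM (hf : ContDiffAt ℝ k f x) (hd : ContDiffAt ℝ k d x) (h0 : 0 < d x) :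
    ContDiffAt ℝ k (fun z => sM (f z) (d z)) x :=
  ((hf.mul (contDiffAt_sS hf hd h0)).div_const 2).add (hd.mul hf)

lemma contDiffAt_sm (hf : ContDiffAt ℝ k f x) (hd : ContDiffAt ℝ k d x) (h0 : 0 < d x) :
    ContDiffAt ℝ k (fun z => sm (f z) (d z)) x :=
  (((hf.pow 2).add ((hd.pow 2).div_const 2)).div (contDiffAt_sS hf hd h0) (sS_pos h0).ne').add hd

lemma contDiffAt_sB (hf : ContDiffAt ℝ k f x) (hd : ContDiffAt ℝ k d x) (h0 : 0 < d x) :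
    ContDiffAt ℝ k (fun z => sB (f z) (d z)) x := by
  have hs := sS_pos (X := f x) h0
  exact ((((hf.mul hd).div (contDiffAt_const.mul (contDiffAt_sS hf hd h0))
    (by positivity)).add hf)).div (contDiffAt_sm hf hd h0) (sm_pos h0).ne'

end ContDiff

variable {n : ℕ} (a : Fin n → ℝ)

/-- The function whose sublevel sets `{h < s}` are the scaled open ellipsoids. -/
def hh (z : Fin n → ℂ) : ℝ := ∑ i, π * ‖z i‖ ^ 2 / a i

/-- The factor `κ = 1/(40n)` between `1 - h` and the smoothing parameter, small enough for the
twist condition, the range estimate and injectivity. -/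
def kap (n : ℕ) : ℝ := 1 / (40 * n)

/-- The smoothing parameter, a multiple of the distance `1 - h` to the boundary level. -/
def dl (z : Fin n → ℂ) : ℝ := kap n * (1 - hh a z)

/-- Real part of the `i`-th coordinate of `z` after time `t` of the Hamiltonian flow of `h`. -/
def XX (i : Fin n) (t : ℝ) (z : Fin n → ℂ) : ℝ :=
  Real.cos (2 * π / a i * t) * (z i).re - Real.sin (2 * π / a i * t) * (z i).im

/-- Imaginary part of the `i`-th coordinate of `z` after time `t` of the Hamiltonian flow of `h`. -/
def YY (i : Fin n) (t : ℝ) (z : Fin n → ℂ) : ℝ :=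
  Real.sin (2 * π / a i * t) * (z i).re + Real.cos (2 * π / a i * t) * (z i).im

/-- The function `u = κ ∑ᵢ Yᵢ B(Xᵢ, δ)`, evaluated after time `t` of the Hamiltonian flow of `h`
(along which `δ` is constant). -/
def uu (t : ℝ) (z : Fin n → ℂ) : ℝ := kap n * ∑ i, YY a i t z * sB (XX a i t z) (dl a z)

/-- The solution `t` of the fixed point equation `t = u(Φ_t z)`. -/
def tt (z : Fin n → ℂ) : ℝ := Classical.epsilon fun t => t = uu a t z

lemma XX_sq_add_YY_sq (i : Fin n) (t : ℝ) (z : Fin n → ℂ) :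
    XX a i t z ^ 2 + YY a i t z ^ 2 = ‖z i‖ ^ 2 := by
  rw [← Complex.normSq_eq_norm_sq, Complex.normSq_apply]
  unfold XX YY
  linear_combination ((z i).re ^ 2 + (z i).im ^ 2) * Real.sin_sq_add_cos_sq (2 * π / a i * t)

lemma kap_pos (hn : 0 < n) : 0 < kap n := by unfold kap; positivity

lemma kap_mul (hn : 0 < n) : kap n * n = 1 / 40 := by
  have : (n : ℝ) ≠ 0 := by positivity
  unfold kap; field_simp

variable {a} {z : Fin n → ℂ}

lemma dl_pos (hn : 0 < n) (hz : hh a z < 1) : 0 < dl a z :=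
  mul_pos (kap_pos hn) (by linarith)

lemma hh_nonneg (h1 : ∀ i, 1 ≤ a i) : 0 ≤ hh a z :=
  Finset.sum_nonneg fun i _ => div_nonneg (by positivity) (by linarith [h1 i])

lemma norm_sq_le_one (h1 : ∀ i, 1 ≤ a i) (h2 : ∀ i, a i ≤ 2) (hz : hh a z < 1) (i : Fin n) :
    ‖z i‖ ^ 2 ≤ 1 := by
  have ha : 0 < a i := by linarith [h1 i]
  have : π * ‖z i‖ ^ 2 / a i ≤ hh a z :=
    Finset.single_le_sum (f := fun i => π * ‖z i‖ ^ 2 / a i)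
      (fun j _ => div_nonneg (by positivity) (by linarith [h1 j])) (Finset.mem_univ i)
  have h3 : π * ‖z i‖ ^ 2 < a i := by
    have := this.trans_lt hz
    rwa [div_lt_one ha] at this
  nlinarith [Real.pi_gt_three, h2 i, sq_nonneg ‖z i‖]

lemma abs_XX_le (h1 : ∀ i, 1 ≤ a i) (h2 : ∀ i, a i ≤ 2) (hz : hh a z < 1) (i : Fin n) (t : ℝ) :
    |XX a i t z| ≤ 1 := by
  have := norm_sq_le_one h1 h2 hz i
  rw [← XX_sq_add_YY_sq a i t z] at this
  apply abs_le_one_iff_mul_self_le_one.2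
  nlinarith [sq_nonneg (YY a i t z)]

lemma abs_YY_le (h1 : ∀ i, 1 ≤ a i) (h2 : ∀ i, a i ≤ 2) (hz : hh a z < 1) (i : Fin n) (t : ℝ) :
    |YY a i t z| ≤ 1 := by
  have := norm_sq_le_one h1 h2 hz i
  rw [← XX_sq_add_YY_sq a i t z] at this
  apply abs_le_one_iff_mul_self_le_one.2
  nlinarith [sq_nonneg (XX a i t z)]

lemma hasDerivAt_XX (i : Fin n) (t : ℝ) :
    HasDerivAt (fun t => XX a i t z) (-(2 * π / a i * YY a i t z)) t := by
  have hl : HasDerivAt (fun t => 2 * π / a i * t) (2 * π / a i) t := by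
    simpa using (hasDerivAt_id t).const_mul (2 * π / a i)
  refine ((hl.cos.mul_const _).sub (hl.sin.mul_const _)).congr_deriv ?_
  simp only [YY]; ring

lemma hasDerivAt_YY (i : Fin n) (t : ℝ) :
    HasDerivAt (fun t => YY a i t z) (2 * π / a i * XX a i t z) t := by
  have hl : HasDerivAt (fun t => 2 * π / a i * t) (2 * π / a i) t := by
    simpa using (hasDerivAt_id t).const_mul (2 * π / a i)
  refine ((hl.sin.mul_const _).add (hl.cos.mul_const _)).congr_deriv ?_
  simp only [XX]; ring

lemma hasDerivAt_uu (hn : 0 < n) (hz : hh a z < 1) (t : ℝ) :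
    HasDerivAt (fun t => uu a t z) (kap n * ∑ i, 2 * π / a i *
      (XX a i t z * sB (XX a i t z) (dl a z) - YY a i t z ^ 2 * sBX (XX a i t z) (dl a z))) t := by
  refine (HasDerivAt.fun_sum fun i _ => ?_).const_mul _
  have hB : HasDerivAt (fun t => sB (XX a i t z) (dl a z))
      (sBX (XX a i t z) (dl a z) * -(2 * π / a i * YY a i t z)) t := by
    have := (hasFDerivAt_sB (hasDerivAt_XX (a := a) (z := z) i t).hasFDerivAt
      (hasFDerivAt_const (dl a z) t) (dl_pos hn hz)).hasDerivAt
    refine this.congr_deriv ?_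
    simp
  refine ((hasDerivAt_YY i t).mul hB).congr_deriv ?_
  ring

/-- The twist condition: `u` grows at rate less than one along the flow. -/
lemma deriv_uu_lt (hn : 0 < n) (h1 : ∀ i, 1 ≤ a i) (h2 : ∀ i, a i ≤ 2) (hz : hh a z < 1) (t : ℝ) :
    kap n * ∑ i, 2 * π / a i * (XX a i t z * sB (XX a i t z) (dl a z)
      - YY a i t z ^ 2 * sBX (XX a i t z) (dl a z)) < 1 := by
  have hd := dl_pos hn hz
  have hb : ∀ i ∈ Finset.univ, 2 * π / a i * (XX a i t z * sB (XX a i t z) (dl a z)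
      - YY a i t z ^ 2 * sBX (XX a i t z) (dl a z)) ≤ 12 := by
    intro i _
    have e1 : 2 * π / a i ≤ 8 := by
      rw [div_le_iff₀ (by linarith [h1 i])]
      nlinarith [Real.pi_lt_four, h1 i]
    have e0 : 0 ≤ 2 * π / a i := div_nonneg (by positivity) (by linarith [h1 i])
    have e2 : XX a i t z * sB (XX a i t z) (dl a z) ≤ 3 / 2 := by
      calc _ ≤ |XX a i t z * sB (XX a i t z) (dl a z)| := le_abs_self _
        _ = |XX a i t z| * |sB (XX a i t z) (dl a z)| := abs_mul _ _
        _ ≤ 1 * (3 / 2) := by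
          gcongr
          · exact abs_XX_le h1 h2 hz i t
          · exact abs_sB_le hd
        _ = _ := one_mul _
    have e3 : 0 ≤ YY a i t z ^ 2 * sBX (XX a i t z) (dl a z) :=
      mul_nonneg (sq_nonneg _) (sBX_nonneg hd)
    nlinarith
  have hs := Finset.sum_le_sum hb
  rw [Finset.sum_const, Finset.card_univ, Fintype.card_fin, nsmul_eq_mul] at hs
  have := mul_le_mul_of_nonneg_left hs (kap_pos hn).le
  rw [← mul_assoc, kap_mul hn] at this
  linarith

lemma abs_uu_le (hn : 0 < n) (h1 : ∀ i, 1 ≤ a i) (h2 : ∀ i, a i ≤ 2) (hz : hh a z < 1) (t : ℝ) :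
    |uu a t z| ≤ 1 := by
  have hd := dl_pos hn hz
  have hb : ∀ i ∈ Finset.univ, |YY a i t z * sB (XX a i t z) (dl a z)| ≤ 3 / 2 := by
    intro i _
    calc _ = |YY a i t z| * |sB (XX a i t z) (dl a z)| := abs_mul _ _
        _ ≤ 1 * (3 / 2) := by
          gcongr
          · exact abs_YY_le h1 h2 hz i t
          · exact abs_sB_le hd
        _ = _ := one_mul _
  have hs := (Finset.abs_sum_le_sum_abs _ _).trans (Finset.sum_le_sum hb)
  rw [Finset.sum_const, Finset.card_univ, Fintype.card_fin, nsmul_eq_mul] at hs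
  have := mul_le_mul_of_nonneg_left hs (kap_pos hn).le
  rw [← mul_assoc, kap_mul hn] at this
  rw [uu, abs_mul, abs_of_pos (kap_pos hn)]
  linarith

lemma strictMono_sub_uu (hn : 0 < n) (h1 : ∀ i, 1 ≤ a i) (h2 : ∀ i, a i ≤ 2) (hz : hh a z < 1) :
    StrictMono fun t => t - uu a t z := by
  apply strictMono_of_deriv_pos
  intro t
  have hd : HasDerivAt (fun t => t - uu a t z) _ t :=
    (hasDerivAt_id t).sub (hasDerivAt_uu hn hz t)
  rw [hd.deriv]
  linarith [deriv_uu_lt hn h1 h2 hz t]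

lemma tt_spec (hn : 0 < n) (h1 : ∀ i, 1 ≤ a i) (h2 : ∀ i, a i ≤ 2) (hz : hh a z < 1) :
    tt a z = uu a (tt a z) z := by
  refine Classical.epsilon_spec (p := fun t => t = uu a t z) ?_
  have hc : ContinuousOn (fun t => t - uu a t z) (Icc (-1) 1) :=
    fun t _ => ((hasDerivAt_id t).sub
      (hasDerivAt_uu hn hz t)).continuousAt.continuousWithinAt
  have hm := intermediate_value_Icc (by norm_num : (-1 : ℝ) ≤ 1) hc
  have l1 := abs_le.1 (abs_uu_le hn h1 h2 hz (-1))
  have l2 := abs_le.1 (abs_uu_le hn h1 h2 hz 1)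
  obtain ⟨t, -, ht⟩ := hm (show (0 : ℝ) ∈ _ from ⟨by linarith [l1.1], by linarith [l2.2]⟩)
  exact ⟨t, by simpa [sub_eq_zero] using ht⟩

lemma tt_unique (hn : 0 < n) (h1 : ∀ i, 1 ≤ a i) (h2 : ∀ i, a i ≤ 2) (hz : hh a z < 1) {t : ℝ}
    (ht : t = uu a t z) : t = tt a z := by
  apply (strictMono_sub_uu hn h1 h2 hz).injective
  have := tt_spec hn h1 h2 hz
  simp only
  linarith

lemma contDiff_hh (a : Fin n → ℝ) : ContDiff ℝ (⊤ : ℕ∞) (hh a) := by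
  unfold hh
  refine ContDiff.sum fun i _ => ?_
  exact (contDiff_const.mul ((contDiff_apply ℝ ℂ i).norm_sq ℝ)).div_const _

lemma contDiff_dl (a : Fin n → ℝ) : ContDiff ℝ (⊤ : ℕ∞) (dl a) :=
  contDiff_const.mul (contDiff_const.sub (contDiff_hh a))

lemma contDiff_XX (a : Fin n → ℝ) (i : Fin n) :
    ContDiff ℝ (⊤ : ℕ∞) fun p : (Fin n → ℂ) × ℝ => XX a i p.2 p.1 := by
  have hz : ContDiff ℝ (⊤ : ℕ∞) fun p : (Fin n → ℂ) × ℝ => p.1 i :=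
    (contDiff_apply ℝ ℂ i).comp contDiff_fst
  have hre := Complex.reCLM.contDiff.comp hz
  have him := Complex.imCLM.contDiff.comp hz
  have hl : ContDiff ℝ (⊤ : ℕ∞) fun p : (Fin n → ℂ) × ℝ => 2 * π / a i * p.2 :=
    contDiff_const.mul contDiff_snd
  exact (hl.cos.mul hre).sub (hl.sin.mul him)

lemma contDiff_YY (a : Fin n → ℝ) (i : Fin n) :
    ContDiff ℝ (⊤ : ℕ∞) fun p : (Fin n → ℂ) × ℝ => YY a i p.2 p.1 := by
  have hz : ContDiff ℝ (⊤ : ℕ∞) fun p : (Fin n → ℂ) × ℝ => p.1 i :=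
    (contDiff_apply ℝ ℂ i).comp contDiff_fst
  have hre := Complex.reCLM.contDiff.comp hz
  have him := Complex.imCLM.contDiff.comp hz
  have hl : ContDiff ℝ (⊤ : ℕ∞) fun p : (Fin n → ℂ) × ℝ => 2 * π / a i * p.2 :=
    contDiff_const.mul contDiff_snd
  exact (hl.sin.mul hre).add (hl.cos.mul him)

lemma contDiffAt_uu (hn : 0 < n) (hz : hh a z < 1) (t : ℝ) :
    ContDiffAt ℝ (⊤ : ℕ∞) (fun p : (Fin n → ℂ) × ℝ => uu a p.2 p.1) (z, t) := by
  unfold uu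
  refine contDiffAt_const.mul (ContDiffAt.sum fun i _ => ?_)
  exact (contDiff_YY a i).contDiffAt.mul (contDiffAt_sB (contDiff_XX a i).contDiffAt
    ((contDiff_dl a).comp contDiff_fst).contDiffAt (dl_pos hn hz))

lemma isOpen_hh_lt (a : Fin n → ℝ) : IsOpen {z | hh a z < 1} :=
  isOpen_lt (contDiff_hh a).continuous continuous_const

/-- The time function is smooth, by the implicit function theorem and uniqueness of solutions. -/
lemma contDiffAt_tt (hn : 0 < n) (h1 : ∀ i, 1 ≤ a i) (h2 : ∀ i, a i ≤ 2) (hz : hh a z < 1) :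
    ContDiffAt ℝ (⊤ : ℕ∞) (tt a) z := by
  set F : (Fin n → ℂ) × ℝ → ℝ := fun p => p.2 - uu a p.2 p.1 with hF
  have cdf : ContDiffAt ℝ (⊤ : ℕ∞) F (z, tt a z) :=
    contDiffAt_snd.sub (contDiffAt_uu hn hz _)
  have hne : ((⊤ : ℕ∞) : WithTop ℕ∞) ≠ 0 := by simp
  have hder : HasDerivAt (fun t => F (z, t)) (fderiv ℝ F (z, tt a z) (0, 1)) (tt a z) := by
    have hp : HasDerivAt (fun t : ℝ => (z, t)) ((0 : Fin n → ℂ), (1 : ℝ)) (tt a z) :=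
      (hasDerivAt_const _ _).prodMk (hasDerivAt_id _)
    exact (cdf.differentiableAt hne).hasFDerivAt.comp_hasDerivAt _ hp
  have hval := hder.unique ((hasDerivAt_id _).sub (hasDerivAt_uu hn hz (tt a z)))
  have hpos : fderiv ℝ F (z, tt a z) (0, 1) ≠ 0 := by
    rw [hval]; linarith [deriv_uu_lt hn h1 h2 hz (tt a z)] |> fun h => ne_of_gt h
  have hinv : (fderiv ℝ F (z, tt a z) ∘L .inr ℝ (Fin n → ℂ) ℝ).IsInvertible := by
    refine ⟨ContinuousLinearEquiv.unitsEquivAut ℝ (Units.mk0 _ hpos), ?_⟩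
    ext
    simp
  have hev := cdf.eventually_apply_implicitFunction hne hinv
  have hsm := cdf.contDiffAt_implicitFunction hne hinv
  refine hsm.congr_of_eventuallyEq ?_
  filter_upwards [hev, (isOpen_hh_lt a).mem_nhds hz] with w hw hw1
  refine (tt_unique hn h1 h2 hw1 ?_).symm
  have h0 : F (z, tt a z) = 0 := by
    simp only [hF]; linarith [tt_spec hn h1 h2 hz]
  rw [h0] at hw
  simp only [hF] at hw
  linarith

/-! ### The map to the cotangent bundle: symplectic identity -/

section Pair

variable {E : Type*} [NormedAddCommGroup E] [NormedSpace ℝ E] {f g d : E → ℝ}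
  {f' g' d' : E →L[ℝ] ℝ} {x : E}

/-- Up to the term involving `dδ`, the change of variables
`(X, Y) ↦ (π M (1 + T²), arctan T / π)` with `T = Y / m` preserves area. -/
lemma pair_wedge (hf : HasFDerivAt f f' x) (hg : HasFDerivAt g g' x) (hd : HasFDerivAt d d' x)
    (h0 : 0 < d x) : ∃ x' y' : E →L[ℝ] ℝ,
      HasFDerivAt (fun z => π * sM (f z) (d z) * (1 + (g z / sm (f z) (d z)) ^ 2)) x' x ∧
      HasFDerivAt (fun z => Real.arctan (g z / sm (f z) (d z)) / π) y' x ∧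
      ∀ v w, x' v * y' w - x' w * y' v = f' v * g' w - f' w * g' v
        + (d' v * (sB (f x) (d x) * g' w + g x * sBX (f x) (d x) * f' w)
          - d' w * (sB (f x) (d x) * g' v + g x * sBX (f x) (d x) * f' v)) := by
  have hm := sm_pos (X := f x) h0
  have hM := hasFDerivAt_sM hf hd h0
  have hT := hasFDerivAt_div hg (hasFDerivAt_sm hf hd h0) hm.ne'
  have hx := (hM.const_mul π).mul ((hT.pow 2).const_add 1)
  have hy := hT.arctan.mul_const π⁻¹
  refine ⟨_, _, hx, hy, fun v w => ?_⟩
  have hp := Real.pi_pos.ne'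
  have h1 : (1 + (g x / sm (f x) (d x)) ^ 2) ≠ 0 := by positivity
  simp only [smul_apply, add_apply, sub_apply, smul_eq_mul, sB, sBX]
  generalize sm (f x) (d x) = m at *
  field_simp
  ring

end Pair

/-- The slope coordinate `Tᵢ = Yᵢ / m(Xᵢ, δ)`, evaluated at the point `Φ_t z` with `t = tt z`. -/
def Tf (a : Fin n → ℝ) (i : Fin n) (z : Fin n → ℂ) : ℝ :=
  YY a i (tt a z) z / sm (XX a i (tt a z) z) (dl a z)

/-- The fibre coordinate `xᵢ`. -/
def xx (a : Fin n → ℝ) (i : Fin n) (z : Fin n → ℂ) : ℝ :=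
  π * sM (XX a i (tt a z) z) (dl a z) * (1 + Tf a i z ^ 2)

/-- The base coordinate `yᵢ`, with values in `(-1/2, 1/2)`. -/
def yy (a : Fin n → ℝ) (i : Fin n) (z : Fin n → ℂ) : ℝ := Real.arctan (Tf a i z) / π

/-- Real part of the `i`-th coordinate, as a linear form. -/
def reL (i : Fin n) : (Fin n → ℂ) →L[ℝ] ℝ := Complex.reCLM ∘L .proj i

/-- Imaginary part of the `i`-th coordinate, as a linear form. -/
def imL (i : Fin n) : (Fin n → ℂ) →L[ℝ] ℝ := Complex.imCLM ∘L .proj i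

/-- The `i`-th summand of the differential of `h`. -/
def qL (a : Fin n → ℝ) (i : Fin n) (z : Fin n → ℂ) : (Fin n → ℂ) →L[ℝ] ℝ :=
  (2 * π / a i) • ((z i).re • reL i + (z i).im • imL i)

lemma hasFDerivAt_re (i : Fin n) : HasFDerivAt (fun w : Fin n → ℂ => (w i).re) (reL i) z :=
  (reL i).hasFDerivAt

lemma hasFDerivAt_im (i : Fin n) : HasFDerivAt (fun w : Fin n → ℂ => (w i).im) (imL i) z :=
  (imL i).hasFDerivAt

lemma hasFDerivAt_hh (a : Fin n → ℝ) (z : Fin n → ℂ) : HasFDerivAt (hh a) (∑ i, qL a i z) z := by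
  have : hh a = fun w => ∑ i, π / a i * ((w i).re ^ 2 + (w i).im ^ 2) := by
    funext w
    refine Finset.sum_congr rfl fun i _ => ?_
    rw [← Complex.normSq_eq_norm_sq, Complex.normSq_apply]
    ring
  rw [this]
  refine HasFDerivAt.fun_sum fun i _ => ?_
  refine ((((hasFDerivAt_re i).pow 2).add ((hasFDerivAt_im i).pow 2)).const_mul _).congr_fderiv ?_
  ext v
  simp only [qL, smul_apply, add_apply, smul_eq_mul]
  push_cast
  ring

lemma hasFDerivAt_dl (a : Fin n → ℝ) (z : Fin n → ℂ) :
    HasFDerivAt (dl a) (-(kap n • ∑ i, qL a i z)) z := by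
  refine (((hasFDerivAt_hh a z).const_sub 1).const_mul (kap n)).congr_fderiv ?_
  simp

section Symp

variable {τ : (Fin n → ℂ) → ℝ} {t' : (Fin n → ℂ) →L[ℝ] ℝ}

lemma hasFDerivAt_XX (ht : HasFDerivAt τ t' z) (i : Fin n) :
    HasFDerivAt (fun w => XX a i (τ w) w)
      (Real.cos (2 * π / a i * τ z) • reL i - Real.sin (2 * π / a i * τ z) • imL i
        - (2 * π / a i * YY a i (τ z) z) • t') z := by
  have hl := ht.const_mul (2 * π / a i)
  refine ((hl.cos.mul (hasFDerivAt_re i)).sub (hl.sin.mul (hasFDerivAt_im i))).congr_fderiv ?_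
  ext v
  simp only [smul_apply, add_apply, sub_apply, smul_eq_mul, YY]
  ring

lemma hasFDerivAt_YY (ht : HasFDerivAt τ t' z) (i : Fin n) :
    HasFDerivAt (fun w => YY a i (τ w) w)
      (Real.sin (2 * π / a i * τ z) • reL i + Real.cos (2 * π / a i * τ z) • imL i
        + (2 * π / a i * XX a i (τ z) z) • t') z := by
  have hl := ht.const_mul (2 * π / a i)
  refine ((hl.sin.mul (hasFDerivAt_re i)).add (hl.cos.mul (hasFDerivAt_im i))).congr_fderiv ?_
  ext v
  simp only [smul_apply, add_apply, smul_eq_mul, XX]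
  ring

end Symp

/-- The functions `xᵢ, yᵢ` are Darboux coordinates. The defect of each pair `(xᵢ, yᵢ)` is `dδ ∧ Pᵢ`,
the flow by time `t` contributes `dh ∧ dt`, and the fixed point equation defining `t` says that
`dt` equals `κ ∑ᵢ Pᵢ` modulo `dh`, so that both contributions cancel after summation. -/
lemma xx_yy_symp (hn : 0 < n) (h1 : ∀ i, 1 ≤ a i) (h2 : ∀ i, a i ≤ 2) (hz : hh a z < 1) :
    ∃ x' y' : Fin n → (Fin n → ℂ) →L[ℝ] ℝ,
      (∀ i, HasFDerivAt (xx a i) (x' i) z) ∧ (∀ i, HasFDerivAt (yy a i) (y' i) z) ∧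
      ∀ v w, ∑ i, (x' i v * y' i w - x' i w * y' i v) = stdSymp n v w := by
  have hd := dl_pos hn hz
  obtain ⟨t', ht⟩ : ∃ t', HasFDerivAt (tt a) t' z :=
    ⟨_, ((contDiffAt_tt hn h1 h2 hz).differentiableAt (by simp)).hasFDerivAt⟩
  have hX := fun i => hasFDerivAt_XX (a := a) ht i
  have hY := fun i => hasFDerivAt_YY (a := a) ht i
  have hdl := hasFDerivAt_dl a z
  choose x' y' hx hy hxy using fun i => pair_wedge (hX i) (hY i) hdl hd
  refine ⟨x', y', hx, hy, fun v w => ?_⟩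
  have hB := fun i => hasFDerivAt_sB (hX i) hdl hd
  have hu : HasFDerivAt (fun w => uu a (tt a w) w) _ z :=
    (HasFDerivAt.fun_sum fun i (_ : i ∈ Finset.univ) => (hY i).mul (hB i)).const_mul (kap n)
  have hev : tt a =ᶠ[nhds z] fun w => uu a (tt a w) w := by
    filter_upwards [(isOpen_hh_lt a).mem_nhds hz] with w hw using tt_spec hn h1 h2 hw
  have hte := ht.unique (hu.congr_of_eventuallyEq hev)
  set X' := fun i => Real.cos (2 * π / a i * tt a z) • reL i
    - Real.sin (2 * π / a i * tt a z) • imL i - (2 * π / a i * YY a i (tt a z) z) • t' with hX'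
  set Y' := fun i => Real.sin (2 * π / a i * tt a z) • reL i
    + Real.cos (2 * π / a i * tt a z) • imL i + (2 * π / a i * XX a i (tt a z) z) • t' with hY'
  set H' := ∑ i, qL a i z with hH'
  set P : Fin n → (Fin n → ℂ) → ℝ := fun i v => sB (XX a i (tt a z) z) (dl a z) * Y' i v
    + YY a i (tt a z) z * sBX (XX a i (tt a z) z) (dl a z) * X' i v with hP
  obtain ⟨e, hdt⟩ : ∃ e : ℝ, ∀ v, t' v = kap n * ∑ i, P i v + e * H' v := by
    refine ⟨-(kap n) ^ 2 * ∑ i, YY a i (tt a z) z * sBd (XX a i (tt a z) z) (dl a z), fun v => ?_⟩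
    have := congrArg (fun L => L v) hte
    simp only [smul_apply, add_apply, smul_eq_mul, sum_apply, neg_apply] at this
    rw [this, mul_assoc, Finset.sum_mul, sq, neg_mul, Finset.mul_sum, Finset.mul_sum,
      Finset.mul_sum, ← sub_eq_add_neg, ← Finset.sum_sub_distrib]
    refine Finset.sum_congr rfl fun i _ => ?_
    simp only [hP, hX', hY', smul_apply, add_apply, sub_apply, smul_eq_mul]
    ring
  have hterm : ∀ i, x' i v * y' i w - x' i w * y' i v =
      ((starRingEnd ℂ) (v i) * w i).im + (qL a i z v * t' w - qL a i z w * t' v)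
        - kap n * (H' v * P i w - H' w * P i v) := by
    intro i
    rw [hxy i v w]
    have hcs := Real.sin_sq_add_cos_sq (2 * π / a i * tt a z)
    have e1 : X' i v * Y' i w - X' i w * Y' i v = ((starRingEnd ℂ) (v i) * w i).im
        + (qL a i z v * t' w - qL a i z w * t' v) := by
      simp only [hX', hY', qL, XX, YY, reL, imL, smul_apply, add_apply, sub_apply, smul_eq_mul,
        Complex.mul_im, Complex.conj_re, Complex.conj_im, ContinuousLinearMap.comp_apply,
        ContinuousLinearMap.proj_apply, Complex.reCLM_apply, Complex.imCLM_apply]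
      generalize Real.sin (2 * π / a i * tt a z) = s at *
      generalize Real.cos (2 * π / a i * tt a z) = c at *
      generalize 2 * π / a i = α at *
      linear_combination ((v i).re * (w i).im - (v i).im * (w i).re
        + α * ((z i).re * (v i).re + (z i).im * (v i).im) * t' w
        - α * ((z i).re * (w i).re + (z i).im * (w i).im) * t' v) * hcs
    rw [← e1]
    simp only [hP, smul_apply, neg_apply, smul_eq_mul]
    ring
  simp only [hterm]
  rw [Finset.sum_sub_distrib, Finset.sum_add_distrib, Finset.sum_sub_distrib, ← Finset.mul_sum,
    Finset.sum_sub_distrib, ← Finset.sum_mul, ← Finset.sum_mul, ← Finset.mul_sum,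
    ← Finset.mul_sum, hdt v, hdt w]
  have hHv : ∀ v, ∑ i, qL a i z v = H' v := fun v => by
    rw [hH', sum_apply]
  rw [hHv, hHv, stdSymp]
  ring

/-! ### The map to the cotangent bundle: smoothness, range and injectivity -/

lemma contDiffAt_XX_tt (hn : 0 < n) (h1 : ∀ i, 1 ≤ a i) (h2 : ∀ i, a i ≤ 2) (hz : hh a z < 1)
    (i : Fin n) : ContDiffAt ℝ (⊤ : ℕ∞) (fun w => XX a i (tt a w) w) z :=
  ContDiffAt.comp z (g := fun p : (Fin n → ℂ) × ℝ => XX a i p.2 p.1) (f := fun w => (w, tt a w))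
    (contDiff_XX a i).contDiffAt (contDiffAt_fun_id.prodMk (contDiffAt_tt hn h1 h2 hz))

lemma contDiffAt_YY_tt (hn : 0 < n) (h1 : ∀ i, 1 ≤ a i) (h2 : ∀ i, a i ≤ 2) (hz : hh a z < 1)
    (i : Fin n) : ContDiffAt ℝ (⊤ : ℕ∞) (fun w => YY a i (tt a w) w) z :=
  ContDiffAt.comp z (g := fun p : (Fin n → ℂ) × ℝ => YY a i p.2 p.1) (f := fun w => (w, tt a w))
    (contDiff_YY a i).contDiffAt (contDiffAt_fun_id.prodMk (contDiffAt_tt hn h1 h2 hz))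

lemma contDiffAt_Tf (hn : 0 < n) (h1 : ∀ i, 1 ≤ a i) (h2 : ∀ i, a i ≤ 2) (hz : hh a z < 1)
    (i : Fin n) : ContDiffAt ℝ (⊤ : ℕ∞) (Tf a i) z := by
  unfold Tf
  exact (contDiffAt_YY_tt hn h1 h2 hz i).div (contDiffAt_sm (contDiffAt_XX_tt hn h1 h2 hz i)
    (contDiff_dl a).contDiffAt (dl_pos hn hz)) (sm_pos (dl_pos hn hz)).ne'

lemma contDiffAt_xx (hn : 0 < n) (h1 : ∀ i, 1 ≤ a i) (h2 : ∀ i, a i ≤ 2) (hz : hh a z < 1)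
    (i : Fin n) : ContDiffAt ℝ (⊤ : ℕ∞) (xx a i) z := by
  unfold xx
  exact (contDiffAt_const.mul (contDiffAt_sM (contDiffAt_XX_tt hn h1 h2 hz i)
    (contDiff_dl a).contDiffAt (dl_pos hn hz))).mul
    (contDiffAt_const.add ((contDiffAt_Tf hn h1 h2 hz i).pow 2))

lemma contDiffAt_yy (hn : 0 < n) (h1 : ∀ i, 1 ≤ a i) (h2 : ∀ i, a i ≤ 2) (hz : hh a z < 1)
    (i : Fin n) : ContDiffAt ℝ (⊤ : ℕ∞) (yy a i) z :=
  (contDiffAt_Tf hn h1 h2 hz i).arctan.div_const _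

lemma abs_yy_lt (a : Fin n → ℝ) (i : Fin n) (z : Fin n → ℂ) : |yy a i z| < 1 / 2 := by
  have hp := Real.pi_pos
  rw [yy, abs_div, abs_of_pos hp, div_lt_iff₀ hp, abs_lt]
  constructor <;> linarith [Real.neg_pi_div_two_lt_arctan (Tf a i z),
    Real.arctan_lt_pi_div_two (Tf a i z)]

/-- The smoothing enlarges `∑ 2|xᵢ|/aᵢ` beyond `h` by less than the available room `1 - h`. -/
lemma sum_abs_xx_lt (hn : 0 < n) (h1 : ∀ i, 1 ≤ a i) (h2 : ∀ i, a i ≤ 2) (hz : hh a z < 1) :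
    ∑ i, 2 * |xx a i z| / a i < 1 := by
  have hd := dl_pos hn hz
  have hk := kap_pos hn
  have hkn := kap_mul hn
  have hd1 : dl a z ≤ 1 := by
    have h0 : 0 ≤ hh a z := hh_nonneg h1
    have : (1 : ℝ) ≤ n := by exact_mod_cast hn
    have : kap n ≤ 1 := by nlinarith
    unfold dl; nlinarith
  have hb : ∀ i ∈ Finset.univ, 2 * |xx a i z| / a i ≤ π * ‖z i‖ ^ 2 / a i + 10 * dl a z := by
    intro i _
    have hX := abs_XX_le h1 h2 hz i (tt a z)
    have ha : 0 < a i := by linarith [h1 i]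
    rw [← XX_sq_add_YY_sq a i (tt a z) z]
    have hm := sm_pos (X := XX a i (tt a z) z) hd
    have hA := two_abs_sM_le_sq (X := XX a i (tt a z) z) hd
    have hB := two_abs_sM_le (X := XX a i (tt a z) z) hd
    have hT : Tf a i z * sm (XX a i (tt a z) z) (dl a z) = YY a i (tt a z) z :=
      div_mul_cancel₀ _ hm.ne'
    have hx : 2 * |xx a i z| = π * (2 * |sM (XX a i (tt a z) z) (dl a z)|
        + Tf a i z ^ 2 * (2 * |sM (XX a i (tt a z) z) (dl a z)|)) := by
      rw [xx, abs_mul, abs_mul, abs_of_pos Real.pi_pos,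
        abs_of_pos (a := 1 + Tf a i z ^ 2) (by positivity)]
      ring
    have hle : 2 * |xx a i z| ≤ π * (XX a i (tt a z) z ^ 2 + YY a i (tt a z) z ^ 2)
        + 10 * dl a z := by
      rw [hx, ← hT]
      have e1 := mul_le_mul_of_nonneg_left hA (sq_nonneg (Tf a i z))
      have e2 : (dl a z) ^ 2 / 2 + 2 * dl a z * |XX a i (tt a z) z| ≤ 5 / 2 * dl a z := by
        nlinarith
      have e3 := mul_le_mul_of_nonneg_left (a := π) (add_le_add hB e1) Real.pi_pos.le
      have e4 := mul_le_mul_of_nonneg_left (a := π) e2 Real.pi_pos.le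
      have e5 : π * (5 / 2 * dl a z) ≤ 10 * dl a z := by nlinarith [Real.pi_lt_four]
      nlinarith
    calc _ ≤ (π * (XX a i (tt a z) z ^ 2 + YY a i (tt a z) z ^ 2) + 10 * dl a z) / a i := by gcongr
      _ ≤ _ := by
        rw [add_div]
        gcongr
        exact div_le_self (by positivity) (h1 i)
  refine (Finset.sum_le_sum hb).trans_lt ?_
  rw [Finset.sum_add_distrib, Finset.sum_const, Finset.card_univ, Fintype.card_fin, nsmul_eq_mul]
  have : (n : ℝ) * (10 * dl a z) = 10 * (kap n * n) * (1 - hh a z) := by unfold dl; ring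
  rw [this, hkn]
  unfold hh at *
  linarith

lemma Tf_eq_of_yy_eq {i : Fin n} {w : Fin n → ℂ} (h : yy a i z = yy a i w) :
    Tf a i z = Tf a i w :=
  Real.arctan_injective (by
    have := Real.pi_pos.ne'
    unfold yy at h
    field_simp at h
    exact h)

lemma sM_eq_of_xx_eq {i : Fin n} {w : Fin n → ℂ} (h : xx a i z = xx a i w)
    (hT : Tf a i z = Tf a i w) :
    sM (XX a i (tt a z) z) (dl a z) = sM (XX a i (tt a w) w) (dl a w) := by
  unfold xx at h
  rw [hT] at h
  have h2 : (1 + Tf a i w ^ 2) ≠ 0 := by positivity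
  exact mul_left_cancel₀ Real.pi_pos.ne' (mul_right_cancel₀ h2 h)

/-- The values of all `xᵢ` and `yᵢ` determine `h`: at fixed values, a smaller `h`, hence a larger
`δ`, forces `∑ π(Xᵢ² + Yᵢ²)/aᵢ` to decrease by at most a small multiple of the change in `h`. -/
lemma hh_le_of_eq (hn : 0 < n) (h1 : ∀ i, 1 ≤ a i) (h2 : ∀ i, a i ≤ 2) (hz : hh a z < 1)
    {w : Fin n → ℂ} (hw : hh a w < 1) (hx : ∀ i, xx a i z = xx a i w)
    (hy : ∀ i, yy a i z = yy a i w) : hh a w ≤ hh a z := by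
  by_contra! hlt
  have hk := kap_pos hn
  have hkn := kap_mul hn
  have hdz := dl_pos hn hz
  have hdw := dl_pos hn hw
  have hΔ : dl a z - dl a w = kap n * (hh a w - hh a z) := by unfold dl; ring
  have hΔ0 : 0 < dl a z - dl a w := by rw [hΔ]; exact mul_pos hk (by linarith)
  have hb : ∀ i ∈ Finset.univ, π * ‖w i‖ ^ 2 / a i ≤
      π * ‖z i‖ ^ 2 / a i + 24 * (dl a z - dl a w) := by
    intro i _
    have ha : 0 < a i := by linarith [h1 i]
    have hT := Tf_eq_of_yy_eq (hy i)
    have hM := sM_eq_of_xx_eq (hx i) hT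
    obtain ⟨hm, hX⟩ := compare hdw (by linarith) hM
    have hmw := sm_pos (X := XX a i (tt a w) w) hdw
    have hTz : Tf a i z * sm (XX a i (tt a z) z) (dl a z) = YY a i (tt a z) z :=
      div_mul_cancel₀ _ (sm_pos hdz).ne'
    have hTw : Tf a i w * sm (XX a i (tt a w) w) (dl a w) = YY a i (tt a w) w :=
      div_mul_cancel₀ _ hmw.ne'
    have hY : YY a i (tt a w) w ^ 2 ≤ YY a i (tt a z) z ^ 2 := by
      rw [← hTz, ← hTw, hT, mul_pow, mul_pow]
      gcongr
    have hX2 : XX a i (tt a w) w ^ 2 ≤ XX a i (tt a z) z ^ 2 + 6 * (dl a z - dl a w) := by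
      have b1 := abs_XX_le h1 h2 hz i (tt a z)
      have b2 := abs_XX_le h1 h2 hw i (tt a w)
      rw [← sq_abs (XX a i (tt a w) w), ← sq_abs (XX a i (tt a z) z)]
      have p1 := abs_nonneg (XX a i (tt a w) w)
      have p2 := abs_nonneg (XX a i (tt a z) z)
      nlinarith
    rw [← XX_sq_add_YY_sq a i (tt a z) z, ← XX_sq_add_YY_sq a i (tt a w) w]
    calc _ ≤ (π * (XX a i (tt a z) z ^ 2 + YY a i (tt a z) z ^ 2)
        + 24 * (dl a z - dl a w)) / a i := by
          gcongr
          nlinarith [Real.pi_pos, Real.pi_lt_four]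
      _ ≤ _ := by
        rw [add_div]
        gcongr
        exact div_le_self (by positivity) (h1 i)
  have hs := Finset.sum_le_sum hb
  rw [Finset.sum_add_distrib, Finset.sum_const, Finset.card_univ, Fintype.card_fin, nsmul_eq_mul,
    hΔ] at hs
  have e : (n : ℝ) * (24 * (kap n * (hh a w - hh a z)))
    = 24 * (kap n * n) * (hh a w - hh a z) := by ring
  rw [e, hkn] at hs
  unfold hh at *
  linarith

lemma eq_of_xx_yy_eq (hn : 0 < n) (h1 : ∀ i, 1 ≤ a i) (h2 : ∀ i, a i ≤ 2) (hz : hh a z < 1)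
    {w : Fin n → ℂ} (hw : hh a w < 1) (hx : ∀ i, xx a i z = xx a i w)
    (hy : ∀ i, yy a i z = yy a i w) : z = w := by
  have hh : hh a z = hh a w := le_antisymm
    (hh_le_of_eq hn h1 h2 hw hz (fun i => (hx i).symm) fun i => (hy i).symm)
    (hh_le_of_eq hn h1 h2 hz hw hx hy)
  have hdl : dl a z = dl a w := by unfold dl; rw [hh]
  have hd := dl_pos hn hw
  have hX : ∀ i, XX a i (tt a z) z = XX a i (tt a w) w := fun i => by
    have := sM_eq_of_xx_eq (hx i) (Tf_eq_of_yy_eq (hy i))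
    rw [hdl] at this
    exact sM_injective hd this
  have hY : ∀ i, YY a i (tt a z) z = YY a i (tt a w) w := fun i => by
    have := Tf_eq_of_yy_eq (hy i)
    unfold Tf at this
    rw [hX, hdl] at this
    exact (div_left_inj' (sm_pos hd).ne').1 this
  -- The time is a function of the rotated point, so both points are rotated by the same angles.
  have ht : tt a z = tt a w := by
    rw [tt_spec hn h1 h2 hz, tt_spec hn h1 h2 hw]
    unfold uu
    simp only [hX, hY, hdl]
  funext i
  have eX := hX i
  have eY := hY i
  rw [ht] at eX eY
  unfold XX at eX
  unfold YY at eY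
  have hcs := Real.sin_sq_add_cos_sq (2 * π / a i * tt a w)
  generalize Real.sin (2 * π / a i * tt a w) = s at *
  generalize Real.cos (2 * π / a i * tt a w) = c at *
  apply Complex.ext
  · linear_combination c * eX + s * eY + ((w i).re - (z i).re) * hcs
  · linear_combination -s * eX + c * eY + ((w i).im - (z i).im) * hcs

/-! ### The affine change of coordinates, polar coordinates and the embedding -/

/-- The fibre part of the affine symplectic change of coordinates, for `n = k + 1`. It takes
`{2|x₀| + ∑_{i ≥ 1} |xᵢ| < 1}` into the unit cube `(0, 1)ⁿ`. -/
def xl {k : ℕ} (x : Fin (k + 1) → ℝ) : Fin (k + 1) → ℝ :=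
  Fin.cons (1 / 2 + (x 0 + (1 / 2) * ∑ i : Fin k, x i.succ))
    fun j => 1 / 2 + (x 0 + (1 / 2) * ∑ i : Fin k, x i.succ - x j.succ)

/-- The base part of the affine symplectic change of coordinates, for `n = k + 1`. -/
def yl {k : ℕ} (y : Fin (k + 1) → ℝ) : Fin (k + 1) → ℝ :=
  Fin.cons (y 0 - ∑ i : Fin k, ((1 / 2) * y 0 - y i.succ)) fun j => (1 / 2) * y 0 - y j.succ

/-- The linear part of `xl` and the map `yl` are transpose inverses of each other. -/
lemma xl_yl_pairing {k : ℕ} (x y : Fin (k + 1) → ℝ) :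
    ∑ j, (xl x j - 1 / 2) * yl y j = ∑ i, x i * y i := by
  rw [Fin.sum_univ_succ, Fin.sum_univ_succ]
  simp only [xl, yl, Fin.cons_zero, Fin.cons_succ, add_sub_cancel_left]
  generalize hS : x 0 + 1 / 2 * ∑ i : Fin k, x i.succ = S
  have e : ∀ j : Fin k, (S - x j.succ) * (1 / 2 * y 0 - y j.succ) =
      S * (1 / 2 * y 0 - y j.succ) - 1 / 2 * y 0 * x j.succ + x j.succ * y j.succ := fun j => by
    ring
  rw [Finset.sum_congr rfl fun j _ => e j, Finset.sum_add_distrib,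
    Finset.sum_sub_distrib (fun j : Fin k => S * (1 / 2 * y 0 - y j.succ)),
    ← Finset.mul_sum, ← Finset.mul_sum]
  linear_combination -y 0 * hS

lemma xl_mem {k : ℕ} {x : Fin (k + 1) → ℝ} (h : 2 * |x 0| + ∑ i : Fin k, |x i.succ| < 1)
    (j : Fin (k + 1)) : 0 < xl x j ∧ xl x j < 1 := by
  have h0 := abs_le.1 (le_refl |x 0|)
  have hsum := abs_le.1 (Finset.abs_sum_le_sum_abs (fun i : Fin k => x i.succ) Finset.univ)
  refine Fin.cases ?_ (fun j => ?_) j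
  · simp only [xl, Fin.cons_zero]
    constructor <;> linarith [h0.1, h0.2, hsum.1, hsum.2]
  · simp only [xl, Fin.cons_succ]
    have e1 := Finset.add_sum_erase Finset.univ (fun i : Fin k => x i.succ) (Finset.mem_univ j)
    have e2 := Finset.add_sum_erase Finset.univ (fun i : Fin k => |x i.succ|) (Finset.mem_univ j)
    have e3 := abs_le.1 (Finset.abs_sum_le_sum_abs (fun i : Fin k => x i.succ)
      (Finset.univ.erase j))
    have e4 := abs_le.1 (le_refl |x j.succ|)
    constructor <;> linarith [h0.1, h0.2, e3.1, e3.2, e4.1, e4.2]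

lemma xl_injective {k : ℕ} {x x₁ : Fin (k + 1) → ℝ} (h : ∀ j, xl x j = xl x₁ j) (i : Fin (k + 1)) :
    x i = x₁ i := by
  have h0 := h 0
  simp only [xl, Fin.cons_zero] at h0
  have hs : ∀ j : Fin k, x j.succ = x₁ j.succ := fun j => by
    have hj := h j.succ
    simp only [xl, Fin.cons_succ] at hj
    linarith
  refine Fin.cases ?_ hs i
  simp only [hs] at h0
  linarith

lemma eq_zero_of_abs_lt_one {r : ℝ} {m : ℤ} (h : r = m) (hr : |r| < 1) : r = 0 := by
  rw [h] at hr ⊢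
  have : |m| < 1 := by exact_mod_cast hr
  rw [Int.abs_lt_one_iff.1 this, Int.cast_zero]

/-- On the cube `(-1/2, 1/2)ⁿ` the map `yl` is injective modulo integers. -/
lemma yl_injective {k : ℕ} {y y₁ : Fin (k + 1) → ℝ} (hy : ∀ i, |y i| < 1 / 2)
    (hy₁ : ∀ i, |y₁ i| < 1 / 2) (h : ∀ j, ∃ m : ℤ, yl y j - yl y₁ j = m) (i : Fin (k + 1)) :
    y i = y₁ i := by
  choose m hm using h
  have hlt : ∀ i, |y i - y₁ i| < 1 := fun i =>
    (abs_sub _ _).trans_lt (by linarith [hy i, hy₁ i])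
  have hs : ∀ j : Fin k, (1 / 2 * y 0 - y j.succ) - (1 / 2 * y₁ 0 - y₁ j.succ) = m j.succ :=
    fun j => by simpa only [yl, Fin.cons_succ] using hm j.succ
  have h0 : y 0 - y₁ 0 = 0 := by
    refine eq_zero_of_abs_lt_one (m := m 0 + ∑ j : Fin k, m j.succ) ?_ (hlt 0)
    have := hm 0
    simp only [yl, Fin.cons_zero] at this
    push_cast
    rw [← this, ← Finset.sum_congr rfl fun j _ => hs j,
      Finset.sum_sub_distrib (fun j : Fin k => 1 / 2 * y 0 - y j.succ)]
    ring
  refine Fin.cases (by linarith) (fun j => ?_) i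
  have : y j.succ - y₁ j.succ = 0 := by
    refine eq_zero_of_abs_lt_one (m := -m j.succ) ?_ (hlt _)
    push_cast
    linarith [hs j]
  linarith

/-- Symplectic polar coordinates: the point of `ℂ` with `π|·|² = p` and argument `2πq`. -/
def polar (p q : ℝ) : ℂ :=
  (√(p / π) * Real.cos (2 * π * q)) • (1 : ℂ) + (√(p / π) * Real.sin (2 * π * q)) • Complex.I

lemma polar_re (p q : ℝ) : (polar p q).re = √(p / π) * Real.cos (2 * π * q) := by
  simp only [polar, Complex.add_re, Complex.smul_re, Complex.one_re, Complex.I_re, smul_eq_mul]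
  ring

lemma polar_im (p q : ℝ) : (polar p q).im = √(p / π) * Real.sin (2 * π * q) := by
  simp only [polar, Complex.add_im, Complex.smul_im, Complex.one_im, Complex.I_im, smul_eq_mul]
  ring

lemma pi_mul_norm_polar_sq {p : ℝ} (hp : 0 < p) (q : ℝ) : π * ‖polar p q‖ ^ 2 = p := by
  have hpi := Real.pi_pos
  rw [← Complex.normSq_eq_norm_sq, Complex.normSq_apply, polar_re, polar_im]
  have h := Real.sq_sqrt (x := p / π) (by positivity)
  have e : π * (p / π) = p := by field_simp
  linear_combination π * √(p / π) ^ 2 * Real.sin_sq_add_cos_sq (2 * π * q) + π * h + e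

lemma polar_injective {p q p₁ q₁ : ℝ} (hp : 0 < p) (hp₁ : 0 < p₁)
    (h : polar p q = polar p₁ q₁) : p = p₁ ∧ ∃ m : ℤ, q - q₁ = m := by
  have e : p = p₁ := by
    rw [← pi_mul_norm_polar_sq hp q, h, pi_mul_norm_polar_sq hp₁]
  subst e
  have hr : √(p / π) ≠ 0 := (Real.sqrt_pos.2 (div_pos hp Real.pi_pos)).ne'
  have h1 := congrArg Complex.re h
  have h2 := congrArg Complex.im h
  rw [polar_re, polar_re] at h1
  rw [polar_im, polar_im] at h2
  obtain ⟨m, hm⟩ := Real.Angle.angle_eq_iff_two_pi_dvd_sub.1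
    (Real.Angle.cos_sin_inj (mul_left_cancel₀ hr h1) (mul_left_cancel₀ hr h2))
  refine ⟨rfl, m, mul_left_cancel₀ (by positivity : 2 * π ≠ 0) ?_⟩
  linarith

section Polar

variable {E : Type*} [NormedAddCommGroup E] [NormedSpace ℝ E] {f g : E → ℝ}
  {f' g' : E →L[ℝ] ℝ} {x : E}

lemma contDiffAt_polar (hf : ContDiffAt ℝ (⊤ : ℕ∞) f x) (hg : ContDiffAt ℝ (⊤ : ℕ∞) g x)
    (h0 : 0 < f x) : ContDiffAt ℝ (⊤ : ℕ∞) (fun z => polar (f z) (g z)) x := by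
  have hr : ContDiffAt ℝ (⊤ : ℕ∞) (fun z => √(f z / π)) x :=
    (hf.div_const π).sqrt (div_pos h0 Real.pi_pos).ne'
  have hl : ContDiffAt ℝ (⊤ : ℕ∞) (fun z => 2 * π * g z) x := contDiffAt_const.mul hg
  exact ((hr.mul hl.cos).smul contDiffAt_const).add ((hr.mul hl.sin).smul contDiffAt_const)

lemma polar_wedge (hf : HasFDerivAt f f' x) (hg : HasFDerivAt g g' x) (h0 : 0 < f x) :
    ∃ L : E →L[ℝ] ℂ, HasFDerivAt (fun z => polar (f z) (g z)) L x ∧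
      ∀ v w, ((starRingEnd ℂ) (L v) * L w).im = f' v * g' w - f' w * g' v := by
  have hpi := Real.pi_pos
  have hr := (hf.mul_const π⁻¹).sqrt (mul_pos h0 (inv_pos.2 hpi)).ne'
  have hl := hg.const_mul (2 * π)
  refine ⟨_, ((hr.mul hl.cos).smul_const (1 : ℂ)).add ((hr.mul hl.sin).smul_const Complex.I),
    fun v w => ?_⟩
  have hr0 : 0 < √(f x * π⁻¹) := Real.sqrt_pos.2 (by positivity)
  have hcs := Real.sin_sq_add_cos_sq (2 * π * g x)
  simp only [add_apply, smul_apply, smul_eq_mul, ContinuousLinearMap.smulRight_apply,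
    Complex.mul_im, Complex.conj_re, Complex.conj_im, Complex.add_re, Complex.add_im,
    Complex.smul_re, Complex.smul_im, Complex.one_re, Complex.one_im, Complex.I_re, Complex.I_im]
  generalize √(f x * π⁻¹) = r at *
  generalize Real.sin (2 * π * g x) = s at *
  generalize Real.cos (2 * π * g x) = c at *
  field_simp
  linear_combination 4 * r ^ 2 * π ^ 2 * (f' v * g' w - f' w * g' v) * hcs

end Polar

lemma interior_ellipsoid_subset (a : Fin n → ℝ) : interior (ellipsoid a) ⊆ {z | hh a z < 1} := by
  intro z hz
  have hle : z ∈ ellipsoid a := interior_subset hz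
  refine lt_of_le_of_ne (show hh a z ≤ 1 from hle) fun h1 => ?_
  have hc : ContinuousAt (fun c : ℝ => c • z) 1 := by fun_prop
  have hev : ∀ᶠ c in nhds (1 : ℝ), c • z ∈ ellipsoid a := by
    apply hc.eventually_mem
    simpa using mem_interior_iff_mem_nhds.1 hz
  have hev' : ∀ᶠ c in nhdsWithin (1 : ℝ) (Ioi 1), c • z ∈ ellipsoid a :=
    hev.filter_mono nhdsWithin_le_nhds
  obtain ⟨c, hcz, hc1⟩ := (hev'.and self_mem_nhdsWithin).exists
  have hc1 : 1 < c := hc1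
  have e : hh a (c • z) = c ^ 2 * hh a z := by
    rw [hh, hh, Finset.mul_sum]
    refine Finset.sum_congr rfl fun i _ => ?_
    rw [Pi.smul_apply, norm_smul, mul_pow, Real.norm_eq_abs, sq_abs]
    ring
  have hcz : hh a (c • z) ≤ 1 := hcz
  rw [e, h1] at hcz
  nlinarith

/-- The weights `(1, 2, …, 2)`. -/
def wt (k : ℕ) : Fin (k + 1) → ℝ := fun i => if (i : ℕ) = 0 then 1 else 2

/-- The embedding of the open ellipsoid into the polydisk. -/
def emb (k : ℕ) (z : Fin (k + 1) → ℂ) : Fin (k + 1) → ℂ := fun j =>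
  polar (xl (fun i => xx (wt k) i z) j) (yl (fun i => yy (wt k) i z) j)

section Emb

variable {k : ℕ} {z : Fin (k + 1) → ℂ}

lemma one_le_wt (i : Fin (k + 1)) : 1 ≤ wt k i := by
  unfold wt; split_ifs <;> norm_num

lemma wt_le_two (i : Fin (k + 1)) : wt k i ≤ 2 := by
  unfold wt; split_ifs <;> norm_num

lemma xl_xx_mem (hz : hh (wt k) z < 1) (j : Fin (k + 1)) :
    0 < xl (fun i => xx (wt k) i z) j ∧ xl (fun i => xx (wt k) i z) j < 1 := by
  apply xl_mem
  have := sum_abs_xx_lt k.succ_pos one_le_wt wt_le_two hz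
  rw [Fin.sum_univ_succ] at this
  simpa [wt] using this

lemma contDiffAt_emb (hz : hh (wt k) z < 1) : ContDiffAt ℝ (⊤ : ℕ∞) (emb k) z := by
  have hx := contDiffAt_xx k.succ_pos one_le_wt wt_le_two hz
  have hy := contDiffAt_yy k.succ_pos one_le_wt wt_le_two hz
  have hsx : ContDiffAt ℝ (⊤ : ℕ∞) (fun w => xx (wt k) 0 w
      + 1 / 2 * ∑ i : Fin k, xx (wt k) i.succ w) z :=
    (hx 0).add (contDiffAt_const.mul (ContDiffAt.sum fun i _ => hx i.succ))
  have hsy : ∀ i : Fin k, ContDiffAt ℝ (⊤ : ℕ∞) (fun w => 1 / 2 * yy (wt k) 0 w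
      - yy (wt k) i.succ w) z := fun i => (contDiffAt_const.mul (hy 0)).sub (hy i.succ)
  refine contDiffAt_pi.2 fun j => contDiffAt_polar ?_ ?_ (xl_xx_mem hz j).1
  · refine Fin.cases ?_ (fun j => ?_) j
    · exact contDiffAt_const.add hsx
    · exact contDiffAt_const.add (hsx.sub (hx j.succ))
  · refine Fin.cases ?_ (fun j => ?_) j
    · exact (hy 0).sub (ContDiffAt.sum fun i _ => hsy i)
    · exact hsy j

lemma emb_symp (hz : hh (wt k) z < 1) (v w : Fin (k + 1) → ℂ) :
    stdSymp (k + 1) (fderiv ℝ (emb k) z v) (fderiv ℝ (emb k) z w) = stdSymp (k + 1) v w := by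
  obtain ⟨x', y', hx, hy, hxy⟩ := xx_yy_symp k.succ_pos one_le_wt wt_le_two hz
  have hX : ∀ j, ∃ L : (Fin (k + 1) → ℂ) →L[ℝ] ℝ,
      HasFDerivAt (fun w => xl (fun i => xx (wt k) i w) j) L z ∧
      ∀ v, L v = xl (fun i => x' i v) j - 1 / 2 := by
    have hs := (hx 0).add ((HasFDerivAt.fun_sum fun (i : Fin k) (_ : i ∈ Finset.univ) =>
      hx i.succ).const_mul (1 / 2))
    intro j
    refine Fin.cases ⟨_, hs.const_add (1 / 2), fun v => ?_⟩
      (fun j => ⟨_, (hs.sub (hx j.succ)).const_add (1 / 2), fun v => ?_⟩) j <;>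
    simp [xl]
  have hY : ∀ j, ∃ L : (Fin (k + 1) → ℂ) →L[ℝ] ℝ,
      HasFDerivAt (fun w => yl (fun i => yy (wt k) i w) j) L z ∧
      ∀ v, L v = yl (fun i => y' i v) j := by
    have hs := fun i : Fin k => ((hy 0).const_mul (1 / 2)).sub (hy i.succ)
    intro j
    refine Fin.cases ⟨_, (hy 0).sub (HasFDerivAt.fun_sum fun (i : Fin k)
      (_ : i ∈ Finset.univ) => hs i), fun v => ?_⟩ (fun j => ⟨_, hs j, fun v => ?_⟩) j <;>
    simp [yl]
  choose X' hX hXv using hX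
  choose Y' hY hYv using hY
  choose L hL hLvw using fun j => polar_wedge (hX j) (hY j) (xl_xx_mem hz j).1
  have hemb : HasFDerivAt (emb k) (ContinuousLinearMap.pi L) z := hasFDerivAt_pi.2 hL
  rw [hemb.fderiv, ← hxy v w, stdSymp]
  simp only [ContinuousLinearMap.pi_apply, hLvw, hXv, hYv]
  rw [Finset.sum_sub_distrib, Finset.sum_sub_distrib, xl_yl_pairing, xl_yl_pairing]

lemma emb_injOn : InjOn (emb k) {z | hh (wt k) z < 1} := by
  intro z hz w hw h
  have hj := fun j => polar_injective (xl_xx_mem hz j).1 (xl_xx_mem hw j).1 (congrFun h j)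
  exact eq_of_xx_yy_eq k.succ_pos one_le_wt wt_le_two hz hw (xl_injective fun j => (hj j).1)
    (yl_injective (fun i => abs_yy_lt _ i z) (fun i => abs_yy_lt _ i w) fun j => (hj j).2)

end Emb

end Fold

/-- For every `n ≥ 2`, the interior of `E(1,2,…,2) ⊂ ℂⁿ` symplectically
embeds into the unit polydisk `P(1,…,1) ⊂ ℂⁿ`. -/
theorem stmt6 (n : ℕ) (hn : 2 ≤ n) :
    SympEmb n (interior (ellipsoid fun i : Fin n => if (i : ℕ) = 0 then (1 : ℝ) else 2))
      (polydisk fun _ => (1 : ℝ)) := by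
  obtain ⟨k, rfl⟩ : ∃ k, n = k + 1 := ⟨n - 1, by omega⟩
  change SympEmb (k + 1) (interior (ellipsoid (Fold.wt k))) _
  have hsub := Fold.interior_ellipsoid_subset (Fold.wt k)
  refine ⟨Fold.emb k, Fold.emb_injOn.mono hsub, ?_, ?_, ?_⟩
  · rintro _ ⟨z, hz, rfl⟩ j
    have hj := Fold.xl_xx_mem (hsub hz) j
    rw [Fold.emb, Fold.pi_mul_norm_polar_sq hj.1]
    exact hj.2.le
  · rw [interior_interior]
    exact fun z hz => (Fold.contDiffAt_emb (hsub hz)).contDiffWithinAt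
  · rw [interior_interior]
    exact fun z hz v w => Fold.emb_symp (hsub hz) v w

end
end
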